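/- arXiv:2507.06143 — 4 statements merged into one kernel-verified Lean document; each statement's English description precedes it below -/
import Mathlib

section
/- Let X and Y be real Banach spaces, let G : X → Y be a Daugavet center with ‖G‖ = 1, let x ∈ B_X, y ∈ S_Y, ε ∈ (0,1), let N ∈ ℕ with N ≥ 1, and let F₁, …, F_k be continuous symmetric multilinear forms on X, where F_j is m_j-linear with 1 ≤ m_j ≤ N. Then there exist x₁, …, x_N ∈ B_X such that ‖y + ∑_{i=1}^{N} G(x_i)‖ > N + 1 − ε/(N+1), and such that |F_j(x_{i₁}, …, x_{i_{m_j}}) − F_j(x, …, x)| < ε for every j ∈ {1, …, k} and every choice of indices 1 ≤ i₁ < i₂ < … < i_{m_j} ≤ N. -/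
/-!
The proof rests on a finite-dimensional version of the Shvydkoy / Bourgain argument: if `G` is a
Daugavet center, `f : X → E` is a bounded operator into a finite-dimensional space and `‖x‖ ≤ 1`,
then for each `u : Y` some `z` in the unit ball has `f z` close to `f x` and `‖u + G z‖` close to
`‖u‖ + 1` (`exists_near_of_center`).

The Daugavet equation for rank-one operators says that every slice of the ball contains points `z`
for which `‖u + t • G z‖` is almost `‖u‖ + t` (`exists_mem_slice`). Let `K` be the closure of the
image of the ball under `f`, and call `p : E` good if, for all `u` and all `t ≥ 0`, such points can
be found with `f z` close to `p` (`goodPoints`). By Hahn–Banach, the values `f z` at the points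
supplied by the slice lemma have a convex hull dense in `K`, so extreme points of `K` are good by
Milman's converse to Krein–Milman. Good points form a closed convex set, because `u` and `t` are
arbitrary: in a convex combination `a • z + b • w`, first choose `z` for `u` and then `w` for
`u + (t * a) • G z`. Krein–Milman now shows that all of `K` is good.

For the theorem, start with all `N` vectors equal to `x` and replace them one at a time. Along an
injective choice of indices, replacing one vector changes at most one entry of each form, so only
finitely many linear functionals have to be controlled at each replacement.
-/

section

variable {X Y : Type*} [NormedAddCommGroup X] [NormedSpace ℝ X]
  [NormedAddCommGroup Y] [NormedSpace ℝ Y]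

/-- If two vectors of the unit ball are almost aligned, so are all their nonnegative multiples. -/
lemma norm_add_smul_ge {y w : Y} (hy : ‖y‖ ≤ 1) (hw : ‖w‖ ≤ 1) {η s t M : ℝ}
    (hM : 0 ≤ M) (hs : s ≤ M) (ht : t ≤ M) (h : 2 - η ≤ ‖y + w‖) :
    s + t - M * η ≤ ‖s • y + t • w‖ := by
  have e : M • (y + w) = (s • y + t • w) + ((M - s) • y + (M - t) • w) := by module
  have h1 : ‖M • (y + w)‖ = M * ‖y + w‖ := by rw [norm_smul, Real.norm_of_nonneg hM]
  have h2 : ‖(M - s) • y‖ ≤ M - s := by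
    rw [norm_smul, Real.norm_of_nonneg (by linarith)]
    exact mul_le_of_le_one_right (by linarith) hy
  have h3 : ‖(M - t) • w‖ ≤ M - t := by
    rw [norm_smul, Real.norm_of_nonneg (by linarith)]
    exact mul_le_of_le_one_right (by linarith) hw
  have h4 := norm_add_le (s • y + t • w) ((M - s) • y + (M - t) • w)
  have h5 := norm_add_le ((M - s) • y) ((M - t) • w)
  rw [← e, h1] at h4
  have h6 := mul_le_mul_of_nonneg_left h hM
  linarith

lemma exists_mem_slice_unit (G : X →L[ℝ] Y) (hG : ‖G‖ = 1)
    (hDC : ∀ (f : X →L[ℝ] ℝ) (y₀ : Y), ‖G + f.smulRight y₀‖ = 1 + ‖f‖ * ‖y₀‖)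
    (g : X →L[ℝ] ℝ) (hg : ‖g‖ = 1) (y : Y) (hy : ‖y‖ = 1) {η : ℝ} (hη : 0 < η) :
    ∃ z : X, ‖z‖ ≤ 1 ∧ 1 - η < g z ∧ 2 - 2 * η ≤ ‖y + G z‖ := by
  have hT : ‖G + g.smulRight y‖ = 2 := by rw [hDC, hg, hy]; norm_num
  obtain ⟨z, hz1, hz⟩ : ∃ z : X, ‖z‖ ≤ 1 ∧ 2 - η < ‖G z + g z • y‖ := by
    obtain ⟨z, hz1, hz⟩ := (G + g.smulRight y).exists_lt_apply_of_lt_opNorm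
      (show 2 - η < ‖G + g.smulRight y‖ by linarith)
    exact ⟨z, hz1.le, by simpa using hz⟩
  -- After replacing `z` by `-z` if necessary, `g z` is nonnegative.
  obtain ⟨z, hz1, hz, hz0⟩ : ∃ z : X, ‖z‖ ≤ 1 ∧ 2 - η < ‖G z + g z • y‖ ∧ 0 ≤ g z := by
    rcases le_total 0 (g z) with h | h
    · exact ⟨z, hz1, hz, h⟩
    · refine ⟨-z, by simpa using hz1, ?_, by simpa using h⟩
      rw [map_neg, map_neg, neg_smul, ← neg_add, norm_neg]
      exact hz
  have hGz : ‖G z‖ ≤ 1 := by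
    have := G.le_opNorm z
    rw [hG] at this
    linarith
  have hgz : g z ≤ 1 := by
    have := (le_abs_self (g z)).trans (g.le_opNorm z)
    rw [hg] at this
    linarith
  have h1 : ‖g z • y‖ = g z := by rw [norm_smul, hy, Real.norm_of_nonneg hz0, mul_one]
  have h2 := norm_add_le (G z) (g z • y)
  refine ⟨z, hz1, by linarith, ?_⟩
  have e : G z + g z • y = (y + G z) - (1 - g z) • y := by module
  have h3 : ‖(1 - g z) • y‖ = 1 - g z := by
    rw [norm_smul, hy, Real.norm_of_nonneg (by linarith), mul_one]
  have h4 := norm_sub_le (y + G z) ((1 - g z) • y)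
  rw [← e, h3] at h4
  linarith

/-- Every slice `{z | c < g z}` of the unit ball contains points `z` at which `‖u + t • G z‖` is
almost `‖u‖ + t`. For `g = 0` the slice is the whole ball, since then `c < 0`. -/
lemma exists_mem_slice (G : X →L[ℝ] Y) (hG : ‖G‖ = 1)
    (hDC : ∀ (f : X →L[ℝ] ℝ) (y₀ : Y), ‖G + f.smulRight y₀‖ = 1 + ‖f‖ * ‖y₀‖)
    (g : X →L[ℝ] ℝ) {c : ℝ} (hc : c < ‖g‖) (u : Y) {t : ℝ} (ht : 0 ≤ t) {δ : ℝ} (hδ : 0 < δ) :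
    ∃ z : X, ‖z‖ ≤ 1 ∧ c < g z ∧ ‖u‖ + t - δ < ‖u + t • G z‖ := by
  have hnt : ∃ z : X, G z ≠ 0 := by
    by_contra! h
    have : G = 0 := by ext z; simpa using h z
    simp [this] at hG
  obtain ⟨z₀, hz₀⟩ := hnt
  have : Nontrivial X := ⟨z₀, 0, fun h => hz₀ (by simp [h])⟩
  obtain ⟨y, hy, huy⟩ : ∃ y : Y, ‖y‖ = 1 ∧ u = ‖u‖ • y := by
    rcases eq_or_ne u 0 with rfl | hu
    · exact ⟨‖G z₀‖⁻¹ • G z₀, by simp [norm_smul, hz₀], by simp⟩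
    · exact ⟨‖u‖⁻¹ • u, by simp [norm_smul, hu], by simp [hu]⟩
  obtain ⟨g', hg', hgg'⟩ : ∃ g' : X →L[ℝ] ℝ, ‖g'‖ = 1 ∧ g = ‖g‖ • g' := by
    rcases eq_or_ne g 0 with rfl | hg
    · obtain ⟨g', hg', -⟩ := exists_dual_vector' ℝ (0 : X)
      exact ⟨g', hg', by simp⟩
    · exact ⟨‖g‖⁻¹ • g, by simp [norm_smul, hg], by simp [hg]⟩
  set M := ‖u‖ + t with hMdef
  have hu0 := norm_nonneg u
  have hg0 := norm_nonneg g
  have hM : 0 ≤ M := by positivity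
  set η := min (δ / (4 * (M + 1))) ((‖g‖ - c) / (‖g‖ + 1)) with hηdef
  have hη : 0 < η := lt_min (by positivity) (div_pos (by linarith) (by positivity))
  have hη1 : η * (4 * (M + 1)) ≤ δ := by
    rw [← le_div_iff₀ (by positivity)]; exact min_le_left _ _
  have hη2 : η * (‖g‖ + 1) ≤ ‖g‖ - c := by
    rw [← le_div_iff₀ (by positivity)]; exact min_le_right _ _
  obtain ⟨z, hz1, hz2, hz3⟩ := exists_mem_slice_unit G hG hDC g' hg' y hy hη
  have hGz : ‖G z‖ ≤ 1 := by
    have := G.le_opNorm z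
    rw [hG] at this
    linarith
  refine ⟨z, hz1, ?_, ?_⟩
  · have : g z = ‖g‖ * g' z := by conv_lhs => rw [hgg']; simp
    rw [this]
    nlinarith
  · have h := norm_add_smul_ge hy.le hGz hM (s := ‖u‖) (t := t) (by linarith) (by linarith) hz3
    rw [← huy] at h
    nlinarith [mul_nonneg hM hη.le]

variable {E : Type*} [NormedAddCommGroup E] [NormedSpace ℝ E]

/-- The points `p : E` such that, for every `u : Y` and every `t ≥ 0`, some `z` in the unit ball of
`X` has `f z` arbitrarily close to `p` and `‖u + t • G z‖` arbitrarily close to `‖u‖ + t`. -/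
def goodPoints (G : X →L[ℝ] Y) (f : X →L[ℝ] E) : Set E :=
  {p | ∀ (u : Y) (t : ℝ), 0 ≤ t → ∀ δ : ℝ, 0 < δ →
    ∃ z : X, ‖z‖ ≤ 1 ∧ ‖f z - p‖ < δ ∧ ‖u‖ + t - δ < ‖u + t • G z‖}

lemma isClosed_goodPoints (G : X →L[ℝ] Y) (f : X →L[ℝ] E) : IsClosed (goodPoints G f) := by
  refine isClosed_of_closure_subset fun p hp u t ht δ hδ => ?_
  obtain ⟨q, hq, hpq⟩ := Metric.mem_closure_iff.1 hp (δ / 2) (by positivity)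
  obtain ⟨z, hz1, hz2, hz3⟩ := hq u t ht (δ / 2) (by positivity)
  refine ⟨z, hz1, ?_, by linarith⟩
  have := norm_sub_le_norm_sub_add_norm_sub (f z) q p
  rw [dist_comm, dist_eq_norm] at hpq
  linarith

lemma convex_goodPoints (G : X →L[ℝ] Y) (f : X →L[ℝ] E) : Convex ℝ (goodPoints G f) := by
  intro p hp q hq a b ha hb hab u t ht δ hδ
  obtain ⟨z, hz1, hz2, hz3⟩ := hp u (t * a) (by positivity) (δ / 2) (by positivity)
  obtain ⟨w, hw1, hw2, hw3⟩ := hq (u + (t * a) • G z) (t * b) (by positivity) (δ / 2)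
    (by positivity)
  refine ⟨a • z + b • w, ?_, ?_, ?_⟩
  · calc ‖a • z + b • w‖ ≤ ‖a • z‖ + ‖b • w‖ := norm_add_le _ _
      _ = a * ‖z‖ + b * ‖w‖ := by
        rw [norm_smul, norm_smul, Real.norm_of_nonneg ha, Real.norm_of_nonneg hb]
      _ ≤ 1 := by nlinarith
  · calc ‖f (a • z + b • w) - (a • p + b • q)‖ = ‖a • (f z - p) + b • (f w - q)‖ := by
          rw [map_add, map_smul, map_smul]; congr 1; module
      _ ≤ ‖a • (f z - p)‖ + ‖b • (f w - q)‖ := norm_add_le _ _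
      _ = a * ‖f z - p‖ + b * ‖f w - q‖ := by
        rw [norm_smul, norm_smul, Real.norm_of_nonneg ha, Real.norm_of_nonneg hb]
      _ < δ := by nlinarith
  · have e : u + t • G (a • z + b • w) = u + (t * a) • G z + (t * b) • G w := by
      rw [map_add, map_smul, map_smul]; module
    rw [e]
    have : t * a + t * b = t := by rw [← mul_add, hab, mul_one]
    linarith

/-- By Carathéodory's theorem the convex hull of `s` consists of combinations of at most
`finrank + 1` points, and for each number of points these form a continuous image of a compact
set. -/
lemma isCompact_convexHull_of_finiteDimensional [FiniteDimensional ℝ E] {s : Set E}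
    (hs : IsCompact s) : IsCompact (convexHull ℝ s) := by
  have heq : convexHull ℝ s = ⋃ n ∈ Set.Iic (Module.finrank ℝ E + 1),
      (fun q : (Fin n → ℝ) × (Fin n → E) => ∑ i, q.1 i • q.2 i) ''
        (stdSimplex ℝ (Fin n) ×ˢ Set.univ.pi fun _ => s) := by
    apply Set.Subset.antisymm
    · intro p hp
      obtain ⟨ι, _, z, w, hz, hind, hw, hw1, hwz⟩ := eq_pos_convex_span_of_mem_convexHull hp
      have hcard : Fintype.card ι ≤ Module.finrank ℝ E + 1 :=
        hind.card_le_finrank_succ.trans (by gcongr; exact Submodule.finrank_le _)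
      refine Set.mem_biUnion hcard ⟨(w ∘ (Fintype.equivFin ι).symm, z ∘ (Fintype.equivFin ι).symm),
        ⟨⟨fun i => (hw _).le, ?_⟩, fun i _ => hz ⟨_, rfl⟩⟩, ?_⟩
      · rw [← hw1]
        exact (Fintype.equivFin ι).symm.sum_comp w
      · rw [← hwz]
        exact (Fintype.equivFin ι).symm.sum_comp fun i => w i • z i
    · refine Set.iUnion₂_subset fun n _ => ?_
      rintro _ ⟨⟨w, z⟩, ⟨hw, hz⟩, rfl⟩
      exact (convex_convexHull ℝ s).sum_mem (fun i _ => hw.1 i) hw.2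
        fun i _ => subset_convexHull ℝ s (hz i trivial)
  rw [heq]
  refine (Set.finite_Iic _).isCompact_biUnion fun n _ => ?_
  exact ((isCompact_stdSimplex ℝ (Fin n)).prod (isCompact_univ_pi fun _ => hs)).image
    (by fun_prop)

/-- Milman's converse to the Krein–Milman theorem, applied to the image of the points supplied by
`exists_mem_slice`. -/
lemma extremePoints_subset_goodPoints [FiniteDimensional ℝ E] (G : X →L[ℝ] Y) (hG : ‖G‖ = 1)
    (hDC : ∀ (f : X →L[ℝ] ℝ) (y₀ : Y), ‖G + f.smulRight y₀‖ = 1 + ‖f‖ * ‖y₀‖)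
    (f : X →L[ℝ] E) (hK : IsCompact (closure (f '' Metric.closedBall 0 1)))
    (hconv : Convex ℝ (closure (f '' Metric.closedBall 0 1))) :
    (closure (f '' Metric.closedBall 0 1)).extremePoints ℝ ⊆ goodPoints G f := by
  intro e he u t ht δ hδ
  set P : Set E := f '' {z | ‖z‖ ≤ 1 ∧ ‖u‖ + t - δ < ‖u + t • G z‖} with hP
  have hPK : closure P ⊆ closure (f '' Metric.closedBall 0 1) :=
    closure_mono (Set.image_mono fun z hz => by simpa using hz.1)
  have hcomp : IsCompact (convexHull ℝ (closure P)) :=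
    isCompact_convexHull_of_finiteDimensional (hK.of_isClosed_subset isClosed_closure hPK)
  have hEq : convexHull ℝ (closure P) = closure (f '' Metric.closedBall 0 1) := by
    refine (convexHull_min hPK hconv).antisymm (closure_minimal ?_ hcomp.isClosed)
    rintro _ ⟨x₀, hx₀, rfl⟩
    by_contra hnot
    obtain ⟨φ, s, hs, hsx⟩ :=
      geometric_hahn_banach_closed_point (convex_convexHull ℝ _) hcomp.isClosed hnot
    have hlt : s < ‖φ.comp f‖ := by
      have h1 := (φ.comp f).unit_le_opNorm x₀ (by simpa using hx₀)
      have h2 := le_abs_self ((φ.comp f) x₀)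
      rw [← Real.norm_eq_abs] at h2
      exact hsx.trans_le (h2.trans h1)
    obtain ⟨z, hz1, hz2, hz3⟩ := exists_mem_slice G hG hDC (φ.comp f) hlt u ht hδ
    exact (hs (f z) (subset_convexHull ℝ _ (subset_closure ⟨z, ⟨hz1, hz3⟩, rfl⟩))).not_gt hz2
  rw [← hEq] at he
  obtain ⟨_, ⟨z, hz, rfl⟩, hd⟩ :=
    Metric.mem_closure_iff.1 (extremePoints_convexHull_subset he) δ hδ
  refine ⟨z, hz.1, ?_, hz.2⟩
  rwa [dist_comm, dist_eq_norm] at hd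

/-- Points `z` with `‖u + G z‖` close to `‖u‖ + 1` are weakly dense in the unit ball; a basic weak
neighbourhood is encoded by an operator `f` into a finite-dimensional space. -/
lemma exists_near_of_center [FiniteDimensional ℝ E] (G : X →L[ℝ] Y) (hG : ‖G‖ = 1)
    (hDC : ∀ (f : X →L[ℝ] ℝ) (y₀ : Y), ‖G + f.smulRight y₀‖ = 1 + ‖f‖ * ‖y₀‖)
    (f : X →L[ℝ] E) {x : X} (hx : ‖x‖ ≤ 1) (u : Y) {δ : ℝ} (hδ : 0 < δ) :
    ∃ z : X, ‖z‖ ≤ 1 ∧ ‖f z - f x‖ < δ ∧ ‖u‖ + 1 - δ < ‖u + G z‖ := by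
  have hK : IsCompact (closure (f '' Metric.closedBall 0 1)) :=
    have := FiniteDimensional.proper_real E
    (f.lipschitz.isBounded_image Metric.isBounded_closedBall).isCompact_closure
  have hconv : Convex ℝ (closure (f '' Metric.closedBall 0 1)) :=
    ((convex_closedBall (0 : X) 1).is_linear_image f.isBoundedLinearMap.toIsLinearMap).closure
  have hsub : closure (f '' Metric.closedBall 0 1) ⊆ goodPoints G f := by
    rw [← closure_convexHull_extremePoints hK hconv]
    exact closure_minimal (convexHull_min
      (extremePoints_subset_goodPoints G hG hDC f hK hconv) (convex_goodPoints G f))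
      (isClosed_goodPoints G f)
  have hmem : f x ∈ goodPoints G f := hsub (subset_closure ⟨x, by simpa using hx, rfl⟩)
  simpa using hmem u 1 zero_le_one δ hδ

/-- The state after replacing the first `n` of the `N` copies of `x`. Allowing all injective index
choices, rather than increasing ones, makes no difference to the argument. -/
lemma exists_partial_approximation (G : X →L[ℝ] Y) (hG : ‖G‖ = 1)
    (hDC : ∀ (f : X →L[ℝ] ℝ) (y₀ : Y), ‖G + f.smulRight y₀‖ = 1 + ‖f‖ * ‖y₀‖)
    {x : X} (hx : ‖x‖ ≤ 1) {y : Y} (hy : ‖y‖ = 1) {δ : ℝ} (hδ : 0 < δ) (N : ℕ)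
    {k : ℕ} {m : Fin k → ℕ}
    (F : (j : Fin k) → ContinuousMultilinearMap ℝ (fun _ : Fin (m j) => X) ℝ)
    (n : ℕ) (hn : n ≤ N) :
    ∃ xs : Fin N → X, (∀ i, ‖xs i‖ ≤ 1) ∧ (∀ i : Fin N, n ≤ i → xs i = x) ∧
      1 + n - n * δ ≤ ‖y + ∑ i with i.val < n, G (xs i)‖ ∧
      ∀ (j : Fin k) (idx : Fin (m j) → Fin N), Function.Injective idx →
        |F j (fun t => xs (idx t)) - F j (fun _ => x)| ≤ n * δ := by
  induction n with
  | zero => exact ⟨fun _ => x, fun _ => hx, fun _ _ => rfl, by simp [hy], by simp⟩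
  | succ n ih =>
    obtain ⟨xs, hball, htail, hnorm, hF⟩ := ih (by omega)
    set i₀ : Fin N := ⟨n, by omega⟩ with hi₀
    have hxi₀ : xs i₀ = x := htail i₀ le_rfl
    let ι := Σ j : Fin k, (Fin (m j) → Fin N) × Fin (m j)
    let f : X →L[ℝ] (ι → ℝ) := ContinuousLinearMap.pi fun q =>
      (F q.1).toContinuousLinearMap (fun t => xs (q.2.1 t)) q.2.2
    obtain ⟨z, hz1, hz2, hz3⟩ := exists_near_of_center G hG hDC f hx
      (y + ∑ i with i.val < n, G (xs i)) hδ
    refine ⟨Function.update xs i₀ z, ?_, ?_, ?_, ?_⟩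
    · intro i
      rcases eq_or_ne i i₀ with rfl | h
      · simpa using hz1
      · simpa [h] using hball i
    · intro i hi
      have h : i ≠ i₀ := by rintro rfl; simp [hi₀] at hi
      rw [Function.update_of_ne h]
      exact htail i (by omega)
    · have hset : (Finset.univ.filter fun i : Fin N => i.val < n + 1) =
          insert i₀ (Finset.univ.filter fun i : Fin N => i.val < n) := by
        ext i
        simp only [Finset.mem_filter, Finset.mem_univ, true_and, Finset.mem_insert, hi₀,
          Fin.ext_iff]
        omega
      have hsum : ∑ i with i.val < n, G (Function.update xs i₀ z i) =
          ∑ i with i.val < n, G (xs i) := by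
        refine Finset.sum_congr rfl fun i hi => ?_
        have h : i ≠ i₀ := by rintro rfl; simp [hi₀] at hi
        rw [Function.update_of_ne h]
      rw [hset, Finset.sum_insert (by simp [hi₀]), hsum, Function.update_self,
        add_left_comm, add_comm (G z)]
      push_cast
      linarith
    · intro j idx hidx
      have hold := hF j idx hidx
      have hstep : |F j (fun t => Function.update xs i₀ z (idx t)) -
          F j (fun t => xs (idx t))| ≤ δ := by
        by_cases hr : ∃ t, idx t = i₀
        · obtain ⟨t, ht⟩ := hr
          have e1 : (fun s => Function.update xs i₀ z (idx s)) =
              Function.update (fun s => xs (idx s)) t z := by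
            rw [← ht]
            exact Function.update_comp_eq_of_injective xs hidx t z
          have e2 : Function.update (fun s => xs (idx s)) t x = fun s => xs (idx s) := by
            rw [← hxi₀, ← ht]
            exact Function.update_eq_self t _
          have h := (norm_le_pi_norm (f z - f x) ⟨j, idx, t⟩).trans hz2.le
          have h' : |F j (Function.update (fun s => xs (idx s)) t z) -
            F j (Function.update (fun s => xs (idx s)) t x)| ≤ δ := h
          rwa [e2, ← e1] at h'
        · push Not at hr
          simp [Function.update_of_ne (hr _), hδ.le]
      have := abs_sub_le (F j (fun t => Function.update xs i₀ z (idx t)))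
        (F j (fun t => xs (idx t))) (F j (fun _ => x))
      push_cast
      linarith

end

/-- inductive building block for Daugavet centers. Given a norm-one Daugavet
center `G : X → Y`, `x ∈ B_X`, `y ∈ S_Y`, `ε ∈ (0,1)`, `N ≥ 1`, and finitely many
continuous symmetric multilinear forms `F j` (each `m j`-linear with `1 ≤ m j ≤ N`), there
are `x₁, …, x_N ∈ B_X` with `‖y + ∑ G x_i‖ > N + 1 - ε/(N+1)` and
`|F j (x_{i₁}, …, x_{i_{m j}}) - F j (x, …, x)| < ε` for all strictly increasing index
choices. -/
theorem daugavet_center_multilinear_approximation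
    {X Y : Type*} [NormedAddCommGroup X] [NormedSpace ℝ X] [CompleteSpace X]
    [NormedAddCommGroup Y] [NormedSpace ℝ Y] [CompleteSpace Y]
    (G : X →L[ℝ] Y) (hG : ‖G‖ = 1)
    (hDC : ∀ (f : X →L[ℝ] ℝ) (y₀ : Y), ‖G + f.smulRight y₀‖ = 1 + ‖f‖ * ‖y₀‖)
    (x : X) (hx : ‖x‖ ≤ 1) (y : Y) (hy : ‖y‖ = 1)
    (ε : ℝ) (hε : ε ∈ Set.Ioo (0 : ℝ) 1)
    (N : ℕ) (hN : 1 ≤ N)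
    (k : ℕ) (m : Fin k → ℕ)
    (F : (j : Fin k) → ContinuousMultilinearMap ℝ (fun _ : Fin (m j) => X) ℝ)
    (hm : ∀ j, 1 ≤ m j ∧ m j ≤ N)
    (hsym : ∀ (j : Fin k) (σ : Equiv.Perm (Fin (m j))) (v : Fin (m j) → X),
      F j (v ∘ σ) = F j v) :
    ∃ xs : Fin N → X, (∀ i, ‖xs i‖ ≤ 1) ∧
      ‖y + ∑ i, G (xs i)‖ > (N : ℝ) + 1 - ε / ((N : ℝ) + 1) ∧
      ∀ (j : Fin k) (idx : Fin (m j) → Fin N), StrictMono idx →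
        |F j (fun t => xs (idx t)) - F j (fun _ => x)| < ε := by
  -- The factor `(N + 1)⁻²` makes the `N` errors add up to less than `ε / (N + 1)`.
  have hδ : 0 < ε / ((N : ℝ) + 1) ^ 2 := div_pos hε.1 (by positivity)
  have hlt : N * (ε / ((N : ℝ) + 1) ^ 2) < ε / ((N : ℝ) + 1) := by
    have e : ε / ((N : ℝ) + 1) = (N + 1) * (ε / ((N : ℝ) + 1) ^ 2) := by field_simp
    rw [e]
    linarith
  have hle : ε / ((N : ℝ) + 1) ≤ ε :=
    div_le_self hε.1.le (by linarith [(Nat.cast_nonneg N : (0 : ℝ) ≤ N)])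
  obtain ⟨xs, hball, -, hnorm, hF⟩ :=
    exists_partial_approximation G hG hDC hx hy hδ N F N le_rfl
  refine ⟨xs, hball, ?_, fun j idx hidx => ?_⟩
  · simp only [Fin.is_lt, Finset.filter_true] at hnorm
    linarith
  · exact (hF j idx hidx.injective).trans_lt (hlt.trans_le hle)
end

section
/- (Every Daugavet center is a polynomial Daugavet center) Let X and Y be real Banach spaces and let G : X → Y be a Daugavet center with ‖G‖ = 1. Then for every continuous scalar polynomial p on X and every y₀ ∈ Y, sup_{‖x‖≤1} ‖G(x) + p(x)·y₀‖ = 1 + (sup_{‖x‖≤1} |p(x)|)·‖y₀‖. -/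
/-! Fix a continuous polynomial `p`, put `M = sup |p|` over the unit ball, and (replacing `(p, y₀)` by
`(-p, -y₀)` if needed) pick `x₀` in the ball with `p x₀` close to `M`. It suffices to find `x` in the
ball with `p x` close to `M` and `‖G x + M • y₀‖` close to `1 + M * ‖y₀‖`.

The point `x` is an average of `x₁, …, xₙ`, chosen one at a time. With
`zₖ = x₀ + n⁻¹ ∑_{i ≤ k} (xᵢ - x₀)`, a convex combination of points of the ball,
`p zₖ₊₁ = p zₖ + n⁻¹ (Dp zₖ) (xₖ₊₁ - x₀) + O(n⁻²)`, uniformly, by a second-order Taylor estimate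
(`IsScalarPoly.secondOrder`). So the value of `p` is nearly preserved along the whole path as soon as
`xₖ₊₁` lies in the slice where the *linear* functional `Dp zₖ` is at least `(Dp zₖ) x₀ - ε`. The
Daugavet equation for rank-one linear operators provides such an `xₖ₊₁` with, moreover,
`‖G xₖ₊₁ + w‖ ≥ 1 + ‖w‖ - ε` for any prescribed `w ≠ 0` (`exists_mem_slice`). Taking
`w = n M y₀ + ∑_{i ≤ k} G xᵢ` gives `‖n M y₀ + ∑ G xᵢ‖ ≥ n M ‖y₀‖ + n - n ε` (`exists_path`), and
`x = zₙ = n⁻¹ ∑ xᵢ` is as wanted. -/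

/-- A continuous scalar polynomial on a real normed space `X`: a function of the form
`p x = c + ∑_{n=1}^{N} F n (x, …, x)` where each `F n` is a continuous `n`-linear form. -/
def IsScalarPoly {X : Type*} [NormedAddCommGroup X] [NormedSpace ℝ X] (p : X → ℝ) : Prop :=
  ∃ (N : ℕ) (c : ℝ) (F : (n : ℕ) → ContinuousMultilinearMap ℝ (fun _ : Fin n => X) ℝ),
    ∀ x : X, p x = c + ∑ n ∈ Finset.Icc 1 N, F n (fun _ => x)

/-- `p` has, at every point of the closed unit ball, a first-order Taylor expansion whose remainder
is at most `C * ‖h‖ ^ 2` for increments `‖h‖ ≤ 1`, with a constant `C` uniform over the ball. -/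
def SecondOrder {X : Type*} [NormedAddCommGroup X] [NormedSpace ℝ X] (p : X → ℝ) : Prop :=
  ∃ C : ℝ, 0 ≤ C ∧ ∀ z : X, ‖z‖ ≤ 1 → ∃ L : X →L[ℝ] ℝ, ∀ h : X, ‖h‖ ≤ 1 →
    |p (z + h) - p z - L h| ≤ C * ‖h‖ ^ 2

section

variable {X Y : Type*} [NormedAddCommGroup X] [NormedSpace ℝ X]
  [NormedAddCommGroup Y] [NormedSpace ℝ Y]

/-- Homogeneous case of the Taylor estimate. The constant depends on the form only through `‖F‖`, which
is what lets the induction on the degree (freezing the first variable) go through. -/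
lemma homogeneous_secondOrder (n : ℕ) : ∃ C : ℝ, 0 ≤ C ∧
    ∀ (F : ContinuousMultilinearMap ℝ (fun _ : Fin n => X) ℝ) (z : X), ‖z‖ ≤ 1 →
      ∃ L : X →L[ℝ] ℝ, ∀ h : X, ‖h‖ ≤ 1 →
        |F (fun _ => z + h) - F (fun _ => z) - L h| ≤ C * ‖F‖ * ‖h‖ ^ 2 := by
  induction n with
  | zero =>
    refine ⟨0, le_rfl, fun F z _ => ⟨0, fun h _ => ?_⟩⟩
    have : (fun _ : Fin 0 => z + h) = fun _ => z := Subsingleton.elim _ _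
    simp [this]
  | succ n ih =>
    obtain ⟨C, hC, H⟩ := ih
    refine ⟨C + n * 2 ^ (n - 1), by positivity, fun F z hz => ?_⟩
    have hcons : ∀ a b : X, F.curryLeft a (fun _ => b) = F (Fin.cons a fun _ => b) :=
      fun a b => rfl
    have hdiag : ∀ a : X, F (fun _ => a) = F.curryLeft a (fun _ => a) := by
      intro a
      rw [hcons]
      congr 1
      ext i
      refine Fin.cases ?_ (fun j => ?_) i <;> simp
    have hnorm : ∀ a : X, ‖F.curryLeft a‖ ≤ ‖F‖ * ‖a‖ := by
      intro a
      have := F.curryLeft.le_opNorm a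
      rwa [ContinuousMultilinearMap.curryLeft_norm] at this
    obtain ⟨L, hL⟩ := H (F.curryLeft z) z hz
    refine ⟨L + (ContinuousMultilinearMap.apply ℝ (fun _ : Fin n => X) ℝ (fun _ => z)).comp
      F.curryLeft, fun h hh => ?_⟩
    have h1 := hL h hh
    have h2 := (F.curryLeft h).norm_image_sub_le (fun _ => z + h) (fun _ => z)
    have e1 : ‖(fun _ : Fin n => z + h) - fun _ => z‖ ≤ ‖h‖ := by
      rw [pi_norm_le_iff_of_nonneg (norm_nonneg _)]
      intro i
      simp
    have e2 : max ‖fun _ : Fin n => z + h‖ ‖fun _ : Fin n => z‖ ≤ 2 := by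
      have : ‖z + h‖ ≤ 2 := (norm_add_le _ _).trans (by linarith)
      refine max_le ?_ ?_ <;> rw [pi_norm_le_iff_of_nonneg (by norm_num)] <;> intro i
      · exact this
      · linarith
    have h3 : |F.curryLeft h (fun _ => z + h) - F.curryLeft h (fun _ => z)|
        ≤ (‖F‖ * ‖h‖) * n * 2 ^ (n - 1) * ‖h‖ := by
      rw [← Real.norm_eq_abs]
      refine h2.trans ?_
      rw [Fintype.card_fin]
      have := hnorm h
      gcongr
    have h4 : |F.curryLeft z (fun _ => z + h) - F.curryLeft z (fun _ => z) - L h|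
        ≤ C * ‖F‖ * ‖h‖ ^ 2 := by
      refine h1.trans ?_
      have : ‖F.curryLeft z‖ ≤ ‖F‖ :=
        (hnorm z).trans (mul_le_of_le_one_right (norm_nonneg _) hz)
      gcongr
    have key : F (fun _ => z + h) - F (fun _ => z) -
        (L + (ContinuousMultilinearMap.apply ℝ (fun _ : Fin n => X) ℝ (fun _ => z)).comp
          F.curryLeft) h
        = (F.curryLeft z (fun _ => z + h) - F.curryLeft z (fun _ => z) - L h)
          + (F.curryLeft h (fun _ => z + h) - F.curryLeft h (fun _ => z)) := by
      rw [hdiag (z + h), hdiag z, map_add]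
      simp only [add_apply, ContinuousLinearMap.comp_apply, ContinuousMultilinearMap.apply_apply]
      ring
    rw [key]
    refine (abs_add_le _ _).trans ?_
    nlinarith [h3, h4]

lemma IsScalarPoly.secondOrder {p : X → ℝ} (hp : IsScalarPoly p) : SecondOrder p := by
  obtain ⟨N, c, F, hF⟩ := hp
  choose C hC H using fun n => homogeneous_secondOrder (X := X) n
  refine ⟨∑ n ∈ Finset.Icc 1 N, C n * ‖F n‖,
    Finset.sum_nonneg fun n _ => mul_nonneg (hC n) (norm_nonneg _), fun z hz => ?_⟩
  choose L hL using fun n => H n (F n) z hz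
  refine ⟨∑ n ∈ Finset.Icc 1 N, L n, fun h hh => ?_⟩
  have key : p (z + h) - p z - (∑ n ∈ Finset.Icc 1 N, L n) h
      = ∑ n ∈ Finset.Icc 1 N, (F n (fun _ => z + h) - F n (fun _ => z) - L n h) := by
    rw [hF, hF, Finset.sum_sub_distrib, Finset.sum_sub_distrib, sum_apply]
    ring
  rw [key, Finset.sum_mul]
  exact (Finset.abs_sum_le_sum_abs _ _).trans (Finset.sum_le_sum fun n _ => hL n h hh)

lemma SecondOrder.neg {p : X → ℝ} (hp : SecondOrder p) : SecondOrder (fun x => -p x) := by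
  obtain ⟨C, hC, H⟩ := hp
  refine ⟨C, hC, fun z hz => ?_⟩
  obtain ⟨L, hL⟩ := H z hz
  refine ⟨-L, fun h hh => ?_⟩
  have := hL h hh
  rw [← abs_neg] at this
  convert this using 2
  simp
  ring

lemma SecondOrder.bounded {p : X → ℝ} (hp : SecondOrder p) :
    ∃ B : ℝ, ∀ x : X, ‖x‖ ≤ 1 → |p x| ≤ B := by
  obtain ⟨C, hC, H⟩ := hp
  obtain ⟨L, hL⟩ := H 0 (by simp)
  refine ⟨C + |p 0| + ‖L‖, fun x hx => ?_⟩
  have h1 := hL x hx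
  rw [zero_add] at h1
  have h2 : |L x| ≤ ‖L‖ := L.unit_le_opNorm x hx
  have h3 : C * ‖x‖ ^ 2 ≤ C :=
    mul_le_of_le_one_right hC (pow_le_one₀ (norm_nonneg _) hx)
  have h4 : p x = (p x - p 0 - L x) + p 0 + L x := by ring
  rw [h4]
  refine (abs_add_three _ _ _).trans ?_
  linarith

/-- Slice form of the Daugavet equation: every slice of the unit ball contains points `x` at which
`‖G x + w‖` is almost `1 + ‖w‖`. Here the slice is given by any functional, possibly zero, and a point
`x₀` of the ball. -/
lemma exists_mem_slice_s15 (G : X →L[ℝ] Y) (hG : ‖G‖ = 1)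
    (hDC : ∀ (f : X →L[ℝ] ℝ) (y₀ : Y), ‖G + f.smulRight y₀‖ = 1 + ‖f‖ * ‖y₀‖)
    (f : X →L[ℝ] ℝ) {x₀ : X} (hx₀ : ‖x₀‖ ≤ 1) {w : Y} (hw : w ≠ 0) {ε : ℝ} (hε : 0 < ε) :
    ∃ x : X, ‖x‖ ≤ 1 ∧ f x₀ - ε ≤ f x ∧ 1 + ‖w‖ - ε ≤ ‖G x + w‖ := by
  -- It is enough to treat functionals of norm one: `f = ‖f‖ • g`, with `g` arbitrary if `f = 0`.
  obtain ⟨g, hg, hfg⟩ : ∃ g : X →L[ℝ] ℝ, ‖g‖ = 1 ∧ f = ‖f‖ • g := by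
    by_cases hf : f = 0
    · have hne : ∃ v : X, v ≠ 0 := by
        by_contra! h
        have : G = 0 := by ext v; simp [h v]
        simp [this] at hG
      obtain ⟨v, hv⟩ := hne
      obtain ⟨g, hg, -⟩ := exists_dual_vector ℝ v (norm_ne_zero_iff.2 hv)
      exact ⟨g, hg, by simp [hf]⟩
    · have : ‖f‖ ≠ 0 := norm_ne_zero_iff.2 hf
      exact ⟨‖f‖⁻¹ • f, by rw [norm_smul]; simp [this], by rw [smul_smul]; simp [this]⟩
  have hw' : 0 < ‖w‖ := norm_pos_iff.2 hw
  obtain ⟨δ, hδ, hδ1, hδ2⟩ : ∃ δ : ℝ, 0 < δ ∧ 2 * δ ≤ ε ∧ ‖f‖ * (δ / ‖w‖) ≤ ε := by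
    refine ⟨min (ε / 2) (ε * ‖w‖ / (‖f‖ + 1)), by positivity, ?_, ?_⟩
    · linarith [min_le_left (ε / 2) (ε * ‖w‖ / (‖f‖ + 1))]
    · calc ‖f‖ * (min (ε / 2) (ε * ‖w‖ / (‖f‖ + 1)) / ‖w‖)
          ≤ (‖f‖ + 1) * ((ε * ‖w‖ / (‖f‖ + 1)) / ‖w‖) := by
            gcongr
            · linarith
            · exact min_le_right _ _
        _ = ε := by field_simp
  have hnorm := hDC g w
  rw [hg, one_mul] at hnorm
  obtain ⟨x, hx, hgx, hxw⟩ :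
      ∃ x : X, ‖x‖ ≤ 1 ∧ 0 ≤ g x ∧ 1 + ‖w‖ - δ < ‖G x + g x • w‖ := by
    obtain ⟨x, hx, hxw⟩ := (G + g.smulRight w).exists_lt_apply_of_lt_opNorm
      (r := 1 + ‖w‖ - δ) (by rw [hnorm]; linarith)
    simp only [add_apply, ContinuousLinearMap.smulRight_apply] at hxw
    rcases le_total 0 (g x) with h | h
    · exact ⟨x, hx.le, h, hxw⟩
    · refine ⟨-x, by simpa using hx.le, by simpa using h, ?_⟩
      rw [map_neg, map_neg, neg_smul, ← neg_add, norm_neg]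
      exact hxw
  have hGx : ‖G x‖ ≤ 1 := hG ▸ G.unit_le_opNorm x hx
  have hgx1 : g x ≤ 1 := (le_abs_self _).trans (hg ▸ g.unit_le_opNorm x hx)
  have hgx0 : g x₀ ≤ 1 := (le_abs_self _).trans (hg ▸ g.unit_le_opNorm x₀ hx₀)
  have h1 : ‖G x + g x • w‖ ≤ 1 + g x * ‖w‖ := by
    refine (norm_add_le _ _).trans ?_
    rw [norm_smul, Real.norm_of_nonneg hgx]
    linarith
  have h2 : (1 - g x) * ‖w‖ ≤ δ := by linarith
  have h3 : 1 - g x ≤ δ / ‖w‖ := by rwa [le_div_iff₀ hw']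
  refine ⟨x, hx, ?_, ?_⟩
  · have e : ∀ v, f v = ‖f‖ * g v := fun v => by
      conv_lhs => rw [hfg]
      rfl
    rw [e x₀, e x]
    have : ‖f‖ * (g x₀ - g x) ≤ ‖f‖ * (δ / ‖w‖) := by gcongr; linarith
    linarith
  · have h4 : ‖G x + g x • w‖ ≤ ‖G x + w‖ + (1 - g x) * ‖w‖ := by
      have : G x + g x • w = (G x + w) - (1 - g x) • w := by module
      rw [this]
      refine (norm_sub_le _ _).trans ?_
      rw [norm_smul, Real.norm_of_nonneg (by linarith)]
    linarith

/-- The path from `x₀` to an average of `n` points of the ball; `s` is the sum of the first `k` of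
these points. -/
lemma exists_path (G : X →L[ℝ] Y) (hG : ‖G‖ = 1)
    (hDC : ∀ (f : X →L[ℝ] ℝ) (y₀ : Y), ‖G + f.smulRight y₀‖ = 1 + ‖f‖ * ‖y₀‖)
    {p : X → ℝ} {C : ℝ} (hC : 0 ≤ C)
    (H : ∀ z : X, ‖z‖ ≤ 1 → ∃ L : X →L[ℝ] ℝ, ∀ h : X, ‖h‖ ≤ 1 →
      |p (z + h) - p z - L h| ≤ C * ‖h‖ ^ 2)
    {x₀ : X} (hx₀ : ‖x₀‖ ≤ 1) {u : Y} (hu : u ≠ 0) {ε : ℝ} (hε : 0 < ε) (hε1 : ε ≤ 1)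
    {n : ℕ} (hn : 2 ≤ n) (k : ℕ) (hk : k ≤ n) :
    ∃ s : X, ‖s‖ ≤ k ∧
      p x₀ - k * (ε / n + 4 * C / n ^ 2) ≤ p (x₀ + (n : ℝ)⁻¹ • (s - (k : ℝ) • x₀)) ∧
      n * ‖u‖ + k - k * ε ≤ ‖(n : ℝ) • u + G s‖ := by
  have hn0 : (0 : ℝ) < n := by exact_mod_cast (by omega : 0 < n)
  induction k with
  | zero => exact ⟨0, by simp, by simp, by simp [norm_smul]⟩
  | succ k ih =>
    obtain ⟨s, hs, hps, hGs⟩ := ih (by omega)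
    have hkn : (k : ℝ) + 1 ≤ n := by exact_mod_cast hk
    have hk0 : (0 : ℝ) ≤ k := k.cast_nonneg
    set z := x₀ + (n : ℝ)⁻¹ • (s - (k : ℝ) • x₀) with hz_def
    have hz : ‖z‖ ≤ 1 := by
      have e : z = (n : ℝ)⁻¹ • (s + ((n : ℝ) - k) • x₀) := by
        rw [hz_def]
        match_scalars <;> field_simp
        ring
      rw [e, norm_smul, Real.norm_of_nonneg (by positivity), inv_mul_le_one₀ hn0]
      refine (norm_add_le _ _).trans ?_
      rw [norm_smul, Real.norm_of_nonneg (by linarith)]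
      have : ((n : ℝ) - k) * ‖x₀‖ ≤ n - k := mul_le_of_le_one_right (by linarith) hx₀
      linarith
    have hw : (n : ℝ) • u + G s ≠ 0 := by
      rw [← norm_pos_iff]
      have h1 : 0 < n * ‖u‖ := mul_pos hn0 (norm_pos_iff.2 hu)
      have h2 : k * ε ≤ k := mul_le_of_le_one_right hk0 hε1
      linarith
    obtain ⟨L, hL⟩ := H z hz
    obtain ⟨x, hx, hLx, hGx⟩ := exists_mem_slice_s15 G hG hDC L hx₀ hw hε
    refine ⟨s + x, ?_, ?_, ?_⟩
    · push_cast
      exact (norm_add_le _ _).trans (by linarith)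
    · have hstep : x₀ + (n : ℝ)⁻¹ • (s + x - ((k + 1 : ℕ) : ℝ) • x₀)
          = z + (n : ℝ)⁻¹ • (x - x₀) := by
        rw [hz_def]
        push_cast
        module
      have hxx : ‖x - x₀‖ ≤ 2 := (norm_sub_le _ _).trans (by linarith)
      have hh : ‖(n : ℝ)⁻¹ • (x - x₀)‖ ≤ 2 / n := by
        rw [norm_smul, Real.norm_of_nonneg (by positivity), inv_mul_eq_div]
        gcongr
      have hh1 : ‖(n : ℝ)⁻¹ • (x - x₀)‖ ≤ 1 := by
        refine hh.trans ((div_le_one hn0).2 ?_)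
        exact_mod_cast hn
      have h1 := (abs_le.1 (hL _ hh1)).1
      have h2 : C * ‖(n : ℝ)⁻¹ • (x - x₀)‖ ^ 2 ≤ 4 * C / n ^ 2 := by
        calc C * ‖(n : ℝ)⁻¹ • (x - x₀)‖ ^ 2 ≤ C * (2 / n) ^ 2 := by gcongr
          _ = 4 * C / n ^ 2 := by ring
      have h3 : -(ε / n) ≤ L ((n : ℝ)⁻¹ • (x - x₀)) := by
        rw [map_smul, map_sub, smul_eq_mul, inv_mul_eq_div, ← neg_div]
        gcongr
        linarith
      rw [hstep]
      push_cast
      linarith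
    · have : (n : ℝ) • u + G (s + x) = G x + ((n : ℝ) • u + G s) := by
        rw [map_add]; abel
      rw [this]
      push_cast
      linarith

/-- For every `x₀` in the ball some `x` in the ball satisfies `p x ≥ p x₀` up to `η` while `‖G x + u‖`
is almost maximal: the endpoint of the path of `exists_path`, for `n` large. -/
lemma exists_almost_max (G : X →L[ℝ] Y) (hG : ‖G‖ = 1)
    (hDC : ∀ (f : X →L[ℝ] ℝ) (y₀ : Y), ‖G + f.smulRight y₀‖ = 1 + ‖f‖ * ‖y₀‖)
    {p : X → ℝ} (hp : SecondOrder p) {x₀ : X} (hx₀ : ‖x₀‖ ≤ 1) {u : Y} (hu : u ≠ 0)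
    {η : ℝ} (hη : 0 < η) :
    ∃ x : X, ‖x‖ ≤ 1 ∧ p x₀ - η ≤ p x ∧ 1 + ‖u‖ - η ≤ ‖G x + u‖ := by
  obtain ⟨C, hC, H⟩ := hp
  obtain ⟨ε, hε, hε1, hεη⟩ : ∃ ε : ℝ, 0 < ε ∧ ε ≤ 1 ∧ ε ≤ η / 2 :=
    ⟨min 1 (η / 2), by positivity, min_le_left _ _, min_le_right _ _⟩
  obtain ⟨m, hm⟩ := exists_nat_ge (8 * C / η)
  obtain ⟨n, hn, hmn⟩ : ∃ n : ℕ, 2 ≤ n ∧ m ≤ n := ⟨max 2 m, le_max_left _ _, le_max_right _ _⟩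
  have hn0 : (0 : ℝ) < n := by exact_mod_cast (by omega : 0 < n)
  have hCn : 4 * C / n ≤ η / 2 := by
    have h1 : 8 * C / η ≤ n := hm.trans (by exact_mod_cast hmn)
    rw [div_le_iff₀ hη] at h1
    rw [div_le_iff₀ hn0]
    linarith
  obtain ⟨s, hs, hps, hGs⟩ := exists_path G hG hDC hC H hx₀ hu hε hε1 hn n le_rfl
  have e1 : x₀ + (n : ℝ)⁻¹ • (s - (n : ℝ) • x₀) = (n : ℝ)⁻¹ • s := by
    match_scalars <;> field_simp
    ring
  have e2 : (n : ℝ) * (ε / n + 4 * C / n ^ 2) = ε + 4 * C / n := by field_simp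
  rw [e1, e2] at hps
  refine ⟨(n : ℝ)⁻¹ • s, ?_, by linarith, ?_⟩
  · rw [norm_smul, Real.norm_of_nonneg (by positivity), inv_mul_le_one₀ hn0]
    exact hs
  · have e3 : (n : ℝ) • u + G s = (n : ℝ) • (G ((n : ℝ)⁻¹ • s) + u) := by
      rw [map_smul, smul_add, smul_smul, mul_inv_cancel₀ hn0.ne', one_smul, add_comm]
    rw [e3, norm_smul, Real.norm_of_nonneg hn0.le] at hGs
    have : (n : ℝ) * (1 + ‖u‖ - ε) ≤ n * ‖G ((n : ℝ)⁻¹ • s) + u‖ := by linarith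
    linarith [le_of_mul_le_mul_left this hn0]

/-- Lower estimate of the norm of `G + p • y₀` from a point where `p` itself, rather than `|p|`, is
almost the supremum `M`. -/
lemma exists_norm_ge (G : X →L[ℝ] Y) (hG : ‖G‖ = 1)
    (hDC : ∀ (f : X →L[ℝ] ℝ) (y₀ : Y), ‖G + f.smulRight y₀‖ = 1 + ‖f‖ * ‖y₀‖)
    {p : X → ℝ} (hp : SecondOrder p) {M : ℝ} (hM : 0 ≤ M) (hpM : ∀ x : X, ‖x‖ ≤ 1 → p x ≤ M)
    {y₀ : Y} (hu : M • y₀ ≠ 0) {η : ℝ} (hη : 0 < η)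
    {x₀ : X} (hx₀ : ‖x₀‖ ≤ 1) (hpx₀ : M - η ≤ p x₀) :
    ∃ x : X, ‖x‖ ≤ 1 ∧ 1 + M * ‖y₀‖ - η * (1 + 2 * ‖y₀‖) ≤ ‖G x + p x • y₀‖ := by
  obtain ⟨x, hx, hpx, hGx⟩ := exists_almost_max G hG hDC hp hx₀ hu hη
  refine ⟨x, hx, ?_⟩
  rw [norm_smul, Real.norm_of_nonneg hM] at hGx
  have hM' := hpM x hx
  have h1 : G x + M • y₀ = (G x + p x • y₀) + (M - p x) • y₀ := by module
  have h2 : ‖G x + M • y₀‖ ≤ ‖G x + p x • y₀‖ + (M - p x) * ‖y₀‖ := by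
    rw [h1]
    refine (norm_add_le _ _).trans ?_
    rw [norm_smul, Real.norm_of_nonneg (by linarith)]
  have h3 : (M - p x) * ‖y₀‖ ≤ (2 * η) * ‖y₀‖ := by gcongr; linarith
  linarith

end


/-- every norm-one (linear) Daugavet center is a polynomial Daugavet center:
for every continuous scalar polynomial `p` and every `y₀ ∈ Y`,
`sup_{‖x‖≤1} ‖G x + p x • y₀‖ = 1 + (sup_{‖x‖≤1} |p x|) * ‖y₀‖`. -/
theorem daugavet_center_is_polynomial_daugavet_center
    {X Y : Type*} [NormedAddCommGroup X] [NormedSpace ℝ X] [CompleteSpace X]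
    [NormedAddCommGroup Y] [NormedSpace ℝ Y] [CompleteSpace Y]
    (G : X →L[ℝ] Y) (hG : ‖G‖ = 1)
    (hDC : ∀ (f : X →L[ℝ] ℝ) (y₀ : Y), ‖G + f.smulRight y₀‖ = 1 + ‖f‖ * ‖y₀‖) :
    ∀ (p : X → ℝ), IsScalarPoly p → ∀ (y₀ : Y),
      (⨆ x : {x : X // ‖x‖ ≤ 1}, ‖G (x : X) + p x • y₀‖) =
        1 + (⨆ x : {x : X // ‖x‖ ≤ 1}, |p x|) * ‖y₀‖ := by
  
  intro p hp y₀
  have hS := hp.secondOrder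
  obtain ⟨B, hB⟩ := hS.bounded
  have : Nonempty {x : X // ‖x‖ ≤ 1} := ⟨⟨0, by simp⟩⟩
  have hbdd : BddAbove (Set.range fun x : {x : X // ‖x‖ ≤ 1} => |p x|) :=
    ⟨B, by rintro _ ⟨x, rfl⟩; exact hB x x.2⟩
  set M := ⨆ x : {x : X // ‖x‖ ≤ 1}, |p x| with hM_def
  have hpM : ∀ x : X, ‖x‖ ≤ 1 → |p x| ≤ M := fun x hx => le_ciSup hbdd ⟨x, hx⟩
  have hM : 0 ≤ M := (abs_nonneg _).trans (hpM 0 (by simp))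
  have hupper : ∀ x : {x : X // ‖x‖ ≤ 1}, ‖G (x : X) + p x • y₀‖ ≤ 1 + M * ‖y₀‖ := by
    intro x
    refine (norm_add_le _ _).trans ?_
    have h1 : ‖G x‖ ≤ 1 := (G.unit_le_opNorm x x.2).trans_eq hG
    rw [norm_smul, Real.norm_eq_abs]
    have := hpM x x.2
    gcongr
  have hbdd' : BddAbove (Set.range fun x : {x : X // ‖x‖ ≤ 1} => ‖G (x : X) + p x • y₀‖) :=
    ⟨_, by rintro _ ⟨x, rfl⟩; exact hupper x⟩
  refine le_antisymm (ciSup_le hupper) ?_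
  suffices hlow : ∀ η : ℝ, 0 < η →
      ∃ x : X, ‖x‖ ≤ 1 ∧ 1 + M * ‖y₀‖ - η * (1 + 2 * ‖y₀‖) ≤ ‖G x + p x • y₀‖ by
    refine le_of_forall_pos_le_add fun ε hε => ?_
    obtain ⟨x, hx, h⟩ := hlow (ε / (1 + 2 * ‖y₀‖)) (by positivity)
    rw [div_mul_cancel₀ _ (by positivity)] at h
    have := le_ciSup hbdd' ⟨x, hx⟩
    simp only at this
    linarith
  intro η hη
  by_cases hu : M • y₀ = 0
  · -- Then `p • y₀` vanishes on the ball, and only `‖G‖ = 1` is at stake.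
    obtain ⟨x, hx, hGx⟩ := G.exists_lt_apply_of_lt_opNorm (r := 1 - η) (by rw [hG]; linarith)
    have h0 : M * ‖y₀‖ = 0 := by
      have := congrArg norm hu
      rwa [norm_smul, Real.norm_of_nonneg hM, norm_zero] at this
    have hpy : p x • y₀ = 0 := by
      have h1 : |p x| * ‖y₀‖ ≤ M * ‖y₀‖ := by
        have := hpM x hx.le
        gcongr
      rw [← norm_le_zero_iff, norm_smul, Real.norm_eq_abs]
      linarith
    refine ⟨x, hx.le, ?_⟩
    rw [hpy, h0, add_zero, add_zero]
    have : 0 ≤ η * (2 * ‖y₀‖) := by positivity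
    linarith
  · obtain ⟨⟨x₀, hx₀⟩, h⟩ := exists_lt_of_lt_ciSup (show M - η < M by linarith)
    simp only at h
    rcases le_total 0 (p x₀) with hs | hs
    · rw [abs_of_nonneg hs] at h
      exact exists_norm_ge G hG hDC hS hM (fun x hx => (le_abs_self _).trans (hpM x hx)) hu hη
        hx₀ h.le
    · rw [abs_of_nonpos hs] at h
      obtain ⟨x, hx, hx'⟩ := exists_norm_ge G hG hDC hS.neg hM
        (fun x hx => (neg_le_abs _).trans (hpM x hx)) (y₀ := -y₀) (by simpa using hu) hη
        hx₀ h.le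
      refine ⟨x, hx, ?_⟩
      simpa using hx'
end

section
/- Let X be a real Banach space with the weak operator Daugavet property (WODP). Then for every x₁, …, x_n ∈ B_X, every ε > 0 and every x' ∈ B_X, the set OF(x₁,…,x_n; x', ε) is weakly dense in B_X; that is, for every y ∈ B_X, every finite family f₁, …, f_m of continuous linear functionals on X and every δ > 0, there exists z ∈ OF(x₁,…,x_n; x', ε) with |f_j(z) − f_j(y)| < δ for every j ∈ {1, …, m}. -/
/-!
By Bourgain's lemma, every nonempty weakly open subset of the ball contains a convex combination of
slices.
So it suffices to find points `z i` in finitely many prescribed slices and one contraction `T`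
sending all of them close to `x'`: then `T` also sends every convex combination of them there.

The common contraction (`exists_common_operator`) is a product of WODP operators. If `T` sends
`z 1, …, z k` close to `x'` and almost fixes `x'`, choose `z (k+1)` and `T'` with
`T' (z (k+1)) ≈ x'` such that `T'` almost fixes the old `z i` as well; then `T ∘ T'` works for all.

The form of Bourgain's lemma used here (`mem_closure_convexHull_slicePoints`) is proved in a
finite-dimensional Euclidean image `F : X → E`. A point of the compact set `closure (F '' B_X)`
farthest from some `p` is strongly exposed, so slices of `B_X` are mapped into arbitrarily small
neighbourhoods of it; and the farthest points from distant `p` have `F (B_X)` in their closed convex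
hull.
-/

/-- The set `OF(x₁,…,x_n; x', ε)`: points `x` of the closed unit ball for which there is an
operator `T` with `‖T‖ ≤ 1` almost fixing each `x_i` and sending `x` close to `x'`. -/
def OF {X : Type*} [NormedAddCommGroup X] [NormedSpace ℝ X]
    {n : ℕ} (xs : Fin n → X) (x' : X) (ε : ℝ) : Set X :=
  {x | ‖x‖ ≤ 1 ∧ ∃ T : X →L[ℝ] X, ‖T‖ ≤ 1 ∧
    (∀ i, ‖T (xs i) - xs i‖ < ε) ∧ ‖T x - x'‖ < ε}

/-- The weak operator Daugavet property. -/
def HasWODP (X : Type*) [NormedAddCommGroup X] [NormedSpace ℝ X] : Prop :=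
  ∀ (n : ℕ) (xs : Fin n → X), (∀ i, ‖xs i‖ ≤ 1) →
    ∀ ε > (0 : ℝ), ∀ (x' : X), ‖x'‖ ≤ 1 →
      ∀ (f : X →L[ℝ] ℝ), ‖f‖ = 1 → ∀ α > (0 : ℝ), ∃ x ∈ OF xs x' ε, f x > 1 - α

/-- The WODP for a finite set of almost fixed points and slices of functionals of any norm,
including the zero functional, whose slices are the whole ball. -/
lemma HasWODP.exists_slice {X : Type*} [NormedAddCommGroup X] [NormedSpace ℝ X]
    (h : HasWODP X) (A : Finset X) (hA : ∀ a ∈ A, ‖a‖ ≤ 1) {ε : ℝ} (hε : 0 < ε)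
    {x' : X} (hx' : ‖x'‖ ≤ 1) (φ : X →L[ℝ] ℝ) {c : ℝ} (hc : 0 < c) :
    ∃ x : X, ‖x‖ ≤ 1 ∧ φ x > ‖φ‖ - c ∧ ∃ T : X →L[ℝ] X, ‖T‖ ≤ 1 ∧
      (∀ a ∈ A, ‖T a - a‖ < ε) ∧ ‖T x - x'‖ < ε := by
  -- On the zero space there are no norm-one functionals and the WODP says nothing.
  rcases subsingleton_or_nontrivial X with hX | hX
  · refine ⟨0, by simp, ?_, 0, by simp, fun a _ => ?_, ?_⟩
    · have : φ = 0 := by ext x; simp [Subsingleton.elim x 0]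
      simp [this, hc]
    · simpa [Subsingleton.elim a 0] using hε
    · simpa [Subsingleton.elim x' 0] using hε
  have key : ∀ f : X →L[ℝ] ℝ, ‖f‖ = 1 → ∀ α > (0 : ℝ), ∃ x : X, ‖x‖ ≤ 1 ∧ f x > 1 - α ∧
      ∃ T : X →L[ℝ] X, ‖T‖ ≤ 1 ∧ (∀ a ∈ A, ‖T a - a‖ < ε) ∧ ‖T x - x'‖ < ε := by
    intro f hf α hα
    obtain ⟨x, ⟨hx, T, hT, hTA, hTx⟩, hfx⟩ := h A.card (fun i => (A.equivFin.symm i : X))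
      (fun i => hA _ (A.equivFin.symm i).2) ε hε x' hx' f hf α hα
    refine ⟨x, hx, hfx, T, hT, fun a ha => ?_, hTx⟩
    simpa using hTA (A.equivFin ⟨a, ha⟩)
  by_cases hφ : φ = 0
  · obtain ⟨v, hv⟩ := exists_ne (0 : X)
    obtain ⟨f, hf, -⟩ := exists_dual_vector ℝ v (by simpa using hv)
    obtain ⟨x, hx, -, hT⟩ := key f hf 1 one_pos
    exact ⟨x, hx, by simp [hφ, hc], hT⟩
  · have hpos : 0 < ‖φ‖ := norm_pos_iff.2 hφ
    obtain ⟨x, hx, hfx, hT⟩ := key (‖φ‖⁻¹ • φ)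
      (by rw [norm_smul, norm_inv, norm_norm, inv_mul_cancel₀ hpos.ne']) (c / ‖φ‖) (by positivity)
    refine ⟨x, hx, ?_, hT⟩
    have h2 := mul_lt_mul_of_pos_left hfx hpos
    simp only [smul_apply, smul_eq_mul] at h2
    rw [mul_inv_cancel_left₀ hpos.ne', mul_sub, mul_div_cancel₀ _ hpos.ne', mul_one] at h2
    exact h2

/-- If `S` almost fixes `u` and the contraction `T` sends `u` close to `v`, then `T ∘ S` sends `w`
close to `v` whenever `S` sends `w` close to `u`. -/
lemma norm_comp_sub_lt {X : Type*} [NormedAddCommGroup X] [NormedSpace ℝ X]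
    {T S : X →L[ℝ] X} (hT : ‖T‖ ≤ 1) {u v w : X} {ε : ℝ}
    (hS : ‖S w - u‖ < ε / 2) (hTu : ‖T u - v‖ < ε / 2) : ‖(T.comp S) w - v‖ < ε := by
  have h1 : ‖T (S w - u)‖ ≤ ‖S w - u‖ := by simpa using T.le_of_opNorm_le hT (S w - u)
  have h2 : (T.comp S) w - v = T (S w - u) + (T u - v) := by simp
  rw [h2]
  linarith [norm_add_le (T (S w - u)) (T u - v)]

/-- Finitely many slices contain points sent close to `x'` by one and the same contraction that
almost fixes a given finite set. -/
lemma HasWODP.exists_common_operator {X : Type*} [NormedAddCommGroup X] [NormedSpace ℝ X]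
    (h : HasWODP X) {ι : Type*} (φ : ι → X →L[ℝ] ℝ) (c : ι → ℝ) (hc : ∀ i, 0 < c i)
    {x' : X} (hx' : ‖x'‖ ≤ 1) (s : Finset ι) :
    ∀ (A : Finset X), (∀ a ∈ A, ‖a‖ ≤ 1) → ∀ ε > (0 : ℝ),
    ∃ z : ι → X, (∀ i ∈ s, ‖z i‖ ≤ 1 ∧ φ i (z i) > ‖φ i‖ - c i) ∧
      ∃ T : X →L[ℝ] X, ‖T‖ ≤ 1 ∧ (∀ a ∈ A, ‖T a - a‖ < ε) ∧
        ∀ i ∈ s, ‖T (z i) - x'‖ < ε := by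
  classical
  induction s using Finset.induction_on with
  | empty =>
    intro A hA ε hε
    exact ⟨0, by simp, ContinuousLinearMap.id ℝ X, ContinuousLinearMap.norm_id_le,
      by simp [hε], by simp⟩
  | insert j s hj ih =>
    intro A hA ε hε
    obtain ⟨z, hz, T, hT, hTA, hTz⟩ := ih (insert x' A)
      (by simpa [hx'] using hA) (ε / 2) (half_pos hε)
    obtain ⟨x, hx, hφx, S, hS, hSA, hSx⟩ := h.exists_slice (A ∪ s.image z)
      (by
        intro a ha
        rcases Finset.mem_union.1 ha with ha | ha
        · exact hA a ha
        · obtain ⟨i, hi, rfl⟩ := Finset.mem_image.1 ha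
          exact (hz i hi).1) (half_pos hε) hx' (φ j) (hc j)
    have hne : ∀ i ∈ s, i ≠ j := fun i hi hij => hj (hij ▸ hi)
    refine ⟨Function.update z j x, ?_, T.comp S, ?_, ?_, ?_⟩
    · intro i hi
      rcases Finset.mem_insert.1 hi with rfl | hi
      · simpa using ⟨hx, hφx⟩
      · simpa [hne i hi] using hz i hi
    · exact (T.opNorm_comp_le S).trans (mul_le_one₀ hT (norm_nonneg _) hS)
    · intro a ha
      exact norm_comp_sub_lt hT (hSA a (by simp [ha])) (hTA a (by simp [ha]))
    · intro i hi
      rcases Finset.mem_insert.1 hi with rfl | hi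
      · rw [Function.update_self]
        exact norm_comp_sub_lt hT hSx (hTA x' (by simp))
      · rw [Function.update_of_ne (hne i hi)]
        exact norm_comp_sub_lt hT
          (hSA _ (Finset.mem_union_right _ (Finset.mem_image_of_mem z hi))) (hTz i hi)

/-- The points `e` such that `F` maps suitable slices of the unit ball into arbitrarily small
neighbourhoods of `e`. The zero functional is allowed, its slice being the whole ball. -/
def slicePoints {X E : Type*} [NormedAddCommGroup X] [NormedSpace ℝ X]
    [NormedAddCommGroup E] [NormedSpace ℝ E] (F : X →L[ℝ] E) : Set E :=
  {e | ∀ η > (0 : ℝ), ∃ φ : X →L[ℝ] ℝ, ∃ c > (0 : ℝ),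
    ∀ x : X, ‖x‖ ≤ 1 → φ x > ‖φ‖ - c → ‖F x - e‖ < η}

/-- A point of the closed image of the ball farthest from `p` is strongly exposed there by the
functional `⟪e - p, ·⟫`. -/
lemma farthest_mem_slicePoints {X E : Type*} [NormedAddCommGroup X] [NormedSpace ℝ X]
    [NormedAddCommGroup E] [InnerProductSpace ℝ E] (F : X →L[ℝ] E) {e p : E}
    (he : e ∈ closure (F '' Metric.closedBall 0 1))
    (hfar : ∀ x : X, ‖x‖ ≤ 1 → ‖F x - p‖ ≤ ‖e - p‖) : e ∈ slicePoints F := by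
  intro η hη
  set φ : X →L[ℝ] ℝ := (innerSL ℝ (e - p)).comp F with hφ
  have hφx : ∀ x, φ x = inner ℝ (e - p) (F x) := fun x => rfl
  have hle : inner ℝ (e - p) e ≤ ‖φ‖ := by
    have hcl : IsClosed {k : E | inner ℝ (e - p) k ≤ ‖φ‖} :=
      isClosed_le (by fun_prop) continuous_const
    refine closure_minimal ?_ hcl he
    rintro _ ⟨x, hx, rfl⟩
    have hx1 : ‖x‖ ≤ 1 := by simpa using hx
    have h1 := φ.le_opNorm x
    have h2 := Real.le_norm_self (φ x)
    have h3 : ‖φ‖ * ‖x‖ ≤ ‖φ‖ := mul_le_of_le_one_right (norm_nonneg _) hx1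
    change inner ℝ (e - p) (F x) ≤ ‖φ‖
    rw [← hφx]
    linarith
  refine ⟨φ, η ^ 2 / 2, by positivity, fun x hx hs => ?_⟩
  -- Expanding `‖F x - p‖² ≤ ‖e - p‖²` around `e` gives `‖F x - e‖² ≤ 2 ⟪e - p, e - F x⟫`.
  have h1 : ‖F x - p‖ ^ 2 ≤ ‖e - p‖ ^ 2 := by
    have := hfar x hx
    gcongr
  have h2 : ‖F x - p‖ ^ 2 = ‖e - p‖ ^ 2 + 2 * inner ℝ (e - p) (F x - e) + ‖F x - e‖ ^ 2 := by
    rw [← norm_add_sq_real]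
    congr 2
    abel
  rw [inner_sub_right, ← hφx] at h2
  refine lt_of_pow_lt_pow_left₀ 2 hη.le ?_
  linarith

/-- A form of Bourgain's lemma: the image of the ball lies in the closed convex hull of the points
determined by slices. -/
lemma mem_closure_convexHull_slicePoints {X E : Type*} [NormedAddCommGroup X] [NormedSpace ℝ X]
    [NormedAddCommGroup E] [InnerProductSpace ℝ E] [FiniteDimensional ℝ E] (F : X →L[ℝ] E)
    {y : X} (hy : ‖y‖ ≤ 1) : F y ∈ closure (convexHull ℝ (slicePoints F)) := by
  by_contra hnot
  obtain ⟨g, s, hgs, hsy⟩ := geometric_hahn_banach_closed_point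
    (convex_convexHull ℝ (slicePoints F)).closure isClosed_closure hnot
  set v : E := (InnerProductSpace.toDual ℝ E).symm g with hv
  have hgv : ∀ k, g k = inner ℝ v k := fun k => by simp [hv]
  set K : Set E := closure (F '' Metric.closedBall 0 1) with hK
  have hbound : ∀ x : X, ‖x‖ ≤ 1 → ‖F x‖ ≤ ‖F‖ := fun x hx =>
    (F.le_opNorm x).trans (mul_le_of_le_one_right (norm_nonneg _) hx)
  have hKsub : K ⊆ Metric.closedBall 0 ‖F‖ := by
    refine closure_minimal ?_ Metric.isClosed_closedBall
    rintro _ ⟨x, hx, rfl⟩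
    simpa using hbound x (by simpa using hx)
  have hKc : IsCompact K :=
    (isCompact_closedBall (0 : E) ‖F‖).of_isClosed_subset isClosed_closure hKsub
  have hFK : ∀ x : X, ‖x‖ ≤ 1 → F x ∈ K := fun x hx =>
    subset_closure ⟨x, by simpa using hx, rfl⟩
  -- The farthest point `e` from `-R • v` satisfies `g (F y) - g e ≤ ‖F‖² / (2 R)`, so this `R`
  -- forces `g e ≥ s`.
  have hd : 0 < g (F y) - s := by linarith
  set R : ℝ := (‖F‖ ^ 2 + 1) / (2 * (g (F y) - s)) with hR
  have hRpos : 0 < R := by positivity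
  have hRd : 2 * R * (g (F y) - s) = ‖F‖ ^ 2 + 1 := by
    rw [hR]
    field_simp
  obtain ⟨e, heK, hmax⟩ := hKc.exists_isMaxOn ⟨F y, hFK y hy⟩
    (f := fun k => ‖k - (-(R • v))‖) (by fun_prop)
  have hfar : ∀ k ∈ K, ‖k - (-(R • v))‖ ≤ ‖e - (-(R • v))‖ := fun k hk => hmax hk
  have heG := farthest_mem_slicePoints F heK (fun x hx => hfar _ (hFK x hx))
  have hges : g e < s := hgs e (subset_closure (subset_convexHull ℝ _ heG))
  have hFe : ‖e‖ ≤ ‖F‖ := by simpa using hKsub heK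
  have h1 : ‖F y - (-(R • v))‖ ^ 2 ≤ ‖e - (-(R • v))‖ ^ 2 := by
    have := hfar _ (hFK y hy)
    gcongr
  have hexp : ∀ k : E, ‖k - (-(R • v))‖ ^ 2 = ‖k‖ ^ 2 + 2 * (R * g k) + ‖R • v‖ ^ 2 := by
    intro k
    rw [sub_neg_eq_add, norm_add_sq_real, inner_smul_right, real_inner_comm, ← hgv]
  rw [hexp, hexp] at h1
  have h2 : ‖e‖ ^ 2 ≤ ‖F‖ ^ 2 := by gcongr
  have h3 : R * g e ≤ R * s := by gcongr
  nlinarith [sq_nonneg ‖F y‖]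

/-- Convex combinations of points close to `b i` stay close to the convex combination of
the `b i`. -/
lemma norm_sum_smul_sub_lt {ι E : Type*} [Fintype ι] [NormedAddCommGroup E] [NormedSpace ℝ E]
    {w : ι → ℝ} (hw : ∀ i, 0 ≤ w i) (hw1 : ∑ i, w i = 1) {a b : ι → E} {ε : ℝ}
    (h : ∀ i, ‖a i - b i‖ < ε) : ‖∑ i, w i • a i - ∑ i, w i • b i‖ < ε := by
  have hmem : ∑ i, w i • (a i - b i) ∈ Metric.ball (0 : E) ε :=
    (convex_ball (0 : E) ε).sum_mem (fun i _ => hw i) hw1 (fun i _ => by simpa using h i)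
  simpa [smul_sub, Finset.sum_sub_distrib] using hmem

/-- if `X` has the WODP, then every set `OF(x₁,…,x_n; x', ε)` is weakly
dense in the closed unit ball. -/
theorem wodp_OF_weakly_dense
    {X : Type*} [NormedAddCommGroup X] [NormedSpace ℝ X] [CompleteSpace X]
    (hWODP : ∀ (n : ℕ) (xs : Fin n → X), (∀ i, ‖xs i‖ ≤ 1) →
      ∀ ε > (0 : ℝ), ∀ (x' : X), ‖x'‖ ≤ 1 →
        ∀ (f : X →L[ℝ] ℝ), ‖f‖ = 1 → ∀ α > (0 : ℝ),
          ∃ x ∈ OF xs x' ε, f x > 1 - α) :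
    ∀ (n : ℕ) (xs : Fin n → X), (∀ i, ‖xs i‖ ≤ 1) →
      ∀ ε > (0 : ℝ), ∀ (x' : X), ‖x'‖ ≤ 1 →
        ∀ (y : X), ‖y‖ ≤ 1 →
          ∀ (m : ℕ) (f : Fin m → (X →L[ℝ] ℝ)), ∀ δ > (0 : ℝ),
            ∃ z ∈ OF xs x' ε, ∀ j : Fin m, |f j z - f j y| < δ := by
  intro n xs hxs ε hε x' hx' y hy m f δ hδ
  classical
  have hW : HasWODP X := hWODP
  let F : X →L[ℝ] EuclideanSpace ℝ (Fin m) :=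
    ((EuclideanSpace.equiv (Fin m) ℝ).symm : (Fin m → ℝ) →L[ℝ] EuclideanSpace ℝ (Fin m)).comp
      (ContinuousLinearMap.pi f)
  have hF : ∀ x j, F x j = f j x := fun x j => rfl
  obtain ⟨q, hq, hqy⟩ := Metric.mem_closure_iff.1 (mem_closure_convexHull_slicePoints F hy)
    (δ / 2) (half_pos hδ)
  obtain ⟨ι, _, w, e, hw, hw1, he, rfl⟩ := mem_convexHull_iff_exists_fintype.1 hq
  choose φ c hc hslice using fun i => he i (δ / 2) (half_pos hδ)
  obtain ⟨z, hz, T, hT, hTA, hTz⟩ := hW.exists_common_operator φ c hc hx' Finset.univ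
    (Finset.univ.image xs) (by simpa using hxs) ε hε
  have hFz : ‖F (∑ i, w i • z i) - F y‖ < δ := by
    have h1 := norm_sum_smul_sub_lt hw hw1 (a := fun i => F (z i)) (b := e)
      (fun i => hslice i (z i) (hz i (Finset.mem_univ i)).1 (hz i (Finset.mem_univ i)).2)
    have h2 : F (∑ i, w i • z i) = ∑ i, w i • F (z i) := by simp
    rw [dist_comm, dist_eq_norm] at hqy
    rw [h2]
    linarith [norm_sub_le_norm_sub_add_norm_sub (∑ i, w i • F (z i)) (∑ i, w i • e i) (F y)]
  refine ⟨∑ i, w i • z i, ⟨?_, T, hT, fun i => hTA _ (by simp), ?_⟩, fun j => ?_⟩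
  · have hmem : ∑ i, w i • z i ∈ Metric.closedBall (0 : X) 1 :=
      (convex_closedBall (0 : X) 1).sum_mem (fun i _ => hw i) hw1
        (fun i _ => by simpa using (hz i (Finset.mem_univ i)).1)
    simpa using hmem
  · have h1 := norm_sum_smul_sub_lt hw hw1 (a := fun i => T (z i)) (b := fun _ => x')
      (fun i => hTz i (Finset.mem_univ i))
    rw [← Finset.sum_smul, hw1, one_smul] at h1
    simpa using h1
  · have h1 := PiLp.norm_apply_le (F (∑ i, w i • z i) - F y) j
    rw [PiLp.sub_apply, hF, hF, Real.norm_eq_abs] at h1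
    exact h1.trans_lt hFz
end

section
/- Let X be a real Banach space with the weak operator Daugavet property, let x₁, …, x_ℓ ∈ B_X, x' ∈ B_X, y ∈ B_X, ε > 0, let N ∈ ℕ with N ≥ 1, and let F₁, …, F_k be continuous symmetric multilinear forms on X, where F_j is m_j-linear with 1 ≤ m_j ≤ N. Then there exist y₁, …, y_N ∈ B_X and a bounded linear operator T : X → X with ‖T‖ ≤ 1 such that ‖T(x_l) − x_l‖ < ε for every l ∈ {1, …, ℓ}, ‖T(y_i) − x'‖ < ε for every i ∈ {1, …, N}, and |F_j(y_{i₁}, …, y_{i_{m_j}}) − F_j(y, …, y)| < ε for every j ∈ {1, …, k} and every choice of indices 1 ≤ i₁ < i₂ < … < i_{m_j} ≤ N. -/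
/-!
The proof first upgrades the slices in the definition of the weak operator Daugavet property to
weak neighbourhoods, then substitutes the vectors `y₁, …, y_N` one at a time.

*From slices to weak neighbourhoods* (`WODP.exists_weakly_close`). Given finitely many functionals
`f i` and `y` in the ball, choose `z₁, z₂, …` greedily: `z_{n+1}` lies in a slice on which the
functional `∑ i, f i (z₁ + ⋯ + z_n - n y) • f i` is at most its value at `y`, up to a small error.
Then `∑ i, f i (z₁ + ⋯ + z_n - n y) ^ 2` grows at most linearly in `n`, so the averages of the `z`'s
converge to `y` when tested against each `f i`. If `T_{n+1}` almost fixes `x'`, the given points and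
the earlier `z`'s, and sends `z_{n+1}` close to `x'`, then `T₁ ∘ ⋯ ∘ T_n` sends every `z` close
to `x'`, hence also their average.

*Substitution* (`WODP.exists_substitution`). Start from `ys = (y, …, y)` and replace the entries one
by one. For an injective choice of indices the new entry occurs in at most one argument of `F j`, so
it only has to be weakly close to `y` with respect to the finitely many functionals obtained
by freezing all other arguments at the current entries. The operators are composed as before.
-/

/-- The weak operator Daugavet property of a real normed space. -/
def WODP (X : Type*) [NormedAddCommGroup X] [NormedSpace ℝ X] : Prop :=
  ∀ (n : ℕ) (xs : Fin n → X), (∀ i, ‖xs i‖ ≤ 1) →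
    ∀ ε > (0 : ℝ), ∀ (x' : X), ‖x'‖ ≤ 1 →
      ∀ (f : X →L[ℝ] ℝ), ‖f‖ = 1 → ∀ α > (0 : ℝ),
        ∃ x : X, ‖x‖ ≤ 1 ∧ f x > 1 - α ∧
          ∃ T : X →L[ℝ] X, ‖T‖ ≤ 1 ∧
            (∀ i, ‖T (xs i) - xs i‖ < ε) ∧ ‖T x - x'‖ < ε

section

variable {X : Type*} [NormedAddCommGroup X] [NormedSpace ℝ X]

/-- The slice in the definition may be replaced by a half-space `g ≤ g y + α` with `y` in the ball,
for any functional `g`, including `g = 0`. -/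
lemma WODP.exists_slice (h : WODP X) {S : Set X} (hS : S.Finite) (hS1 : ∀ s ∈ S, ‖s‖ ≤ 1)
    {ε : ℝ} (hε : 0 < ε) {x' : X} (hx' : ‖x'‖ ≤ 1) (g : X →L[ℝ] ℝ) {y : X} (hy : ‖y‖ ≤ 1)
    {α : ℝ} (hα : 0 < α) :
    ∃ (z : X) (T : X →L[ℝ] X), ‖z‖ ≤ 1 ∧ ‖T‖ ≤ 1 ∧ g z ≤ g y + α ∧
      (∀ s ∈ S, ‖T s - s‖ < ε) ∧ ‖T z - x'‖ < ε := by
  rcases eq_or_ne g 0 with rfl | hg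
  · exact ⟨x', ContinuousLinearMap.id ℝ X, hx', ContinuousLinearMap.norm_id_le,
      by simpa using hα.le, by simpa using fun _ _ => hε, by simpa using hε⟩
  have hg0 : 0 < ‖g‖ := norm_pos_iff.mpr hg
  have := hS.to_subtype
  let e := Finite.equivFin S
  -- The slice is taken in the direction of `-g`, normalised.
  obtain ⟨z, hz, hgz, T, hT, hTS, hTz⟩ := h (Nat.card S) (fun i => (e.symm i : X))
    (fun i => hS1 _ (e.symm i).2) ε hε x' hx' (-(‖g‖⁻¹ • g))
    (by rw [norm_neg, norm_smul, norm_inv, norm_norm, inv_mul_cancel₀ hg0.ne']) (α / ‖g‖)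
    (by positivity)
  refine ⟨z, T, hz, hT, ?_, fun s hs => ?_, hTz⟩
  · have h1 : -‖g‖ ≤ g y := by
      have := (g.le_opNorm y).trans (mul_le_of_le_one_right hg0.le hy)
      exact (abs_le.mp this).1
    have h2 : ‖g‖ * (1 - α / ‖g‖) < ‖g‖ * (-(‖g‖⁻¹ • g)) z := mul_lt_mul_of_pos_left hgz hg0
    have h3 : ‖g‖ * (1 - α / ‖g‖) = ‖g‖ - α := by field_simp
    have h4 : ‖g‖ * (-(‖g‖⁻¹ • g)) z = - g z := by
      simp [mul_inv_cancel_left₀ hg0.ne']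
    linarith
  · have h5 := hTS (e ⟨s, hs⟩)
    rwa [e.symm_apply_apply] at h5

lemma norm_apply_le_of_norm_le_one {T : X →L[ℝ] X} (hT : ‖T‖ ≤ 1) (v : X) : ‖T v‖ ≤ ‖v‖ := by
  simpa using T.le_of_opNorm_le hT v

/-- The greedy construction: `s` is the sum of `n` vectors of the ball, each sent close to `x'`
by `T`. The set `S` of almost fixed points contains `x'`, so that the operators obtained at successive
stages can be composed. -/
lemma WODP.exists_sum (h : WODP X) {S : Set X} (hS : S.Finite) (hS1 : ∀ s ∈ S, ‖s‖ ≤ 1)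
    {x' : X} (hx' : x' ∈ S) {ι : Type*} [Fintype ι] (f : ι → X →L[ℝ] ℝ) {y : X} (hy : ‖y‖ ≤ 1)
    (n : ℕ) : ∀ {ε : ℝ}, 0 < ε →
    ∃ (s : X) (T : X →L[ℝ] X), ‖s‖ ≤ n ∧ ‖T‖ ≤ 1 ∧ (∀ p ∈ S, ‖T p - p‖ < ε) ∧
      ‖T s - (n : ℝ) • x'‖ < ε ∧
      ∑ i, (f i s - n * f i y) ^ 2 ≤ (∑ i, (2 * ‖f i‖) ^ 2 + 1) * n := by
  induction n with
  | zero =>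
    intro ε hε
    exact ⟨0, ContinuousLinearMap.id ℝ X, by simp, ContinuousLinearMap.norm_id_le,
      by simpa using fun _ _ => hε, by simpa using hε, by simp⟩
  | succ n ih =>
    intro ε hε
    obtain ⟨s, T, hs, hT, hTS, hTs, hsum⟩ := ih (ε := ε / 4) (by positivity)
    have hn : (0 : ℝ) < n + 1 := by positivity
    have hs' : ‖((n : ℝ) + 1)⁻¹ • s‖ ≤ 1 := by
      rw [norm_smul, norm_inv, Real.norm_of_nonneg hn.le, inv_mul_le_iff₀ hn]
      linarith
    obtain ⟨z, U, hz, hU, hgz, hUS, hUz⟩ := h.exists_slice (hS.insert (((n : ℝ) + 1)⁻¹ • s))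
      (by simpa [Set.forall_mem_insert] using ⟨hs', hS1⟩)
      (ε := ε / (4 * (n + 1))) (by positivity) (hS1 _ hx')
      (∑ i, (f i s - n * f i y) • f i) hy (α := 1 / 2) (by norm_num)
    have hle : ε / (4 * (n + 1)) ≤ ε / 4 := by
      apply div_le_div_of_nonneg_left hε.le (by norm_num)
      linarith [(Nat.cast_nonneg n : (0 : ℝ) ≤ n)]
    have hUs : ‖U s - s‖ < ε / 4 := by
      have h1 := hUS _ (Set.mem_insert _ _)
      rw [map_smul, ← smul_sub, norm_smul, norm_inv, Real.norm_of_nonneg hn.le,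
        inv_mul_lt_iff₀ hn] at h1
      calc _ < _ := h1
        _ = ε / 4 := by field_simp
    refine ⟨s + z, T.comp U, ?_, ?_, fun p hp => ?_, ?_, ?_⟩
    · push_cast
      exact (norm_add_le _ _).trans (add_le_add hs hz)
    · exact (ContinuousLinearMap.opNorm_comp_le _ _).trans (mul_le_one₀ hT (norm_nonneg _) hU)
    · have e : T.comp U p - p = T (U p - p) + (T p - p) := by simp
      rw [e]
      have h1 := norm_apply_le_of_norm_le_one hT (U p - p)
      have h2 := hUS p (Set.mem_insert_of_mem _ hp)
      linarith [norm_add_le (T (U p - p)) (T p - p), hTS p hp]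
    · have e : T.comp U (s + z) - ((n + 1 : ℕ) : ℝ) • x' =
          T (U s - s) + (T s - (n : ℝ) • x') + T (U z - x') + (T x' - x') := by
        simp only [ContinuousLinearMap.comp_apply, map_add, map_sub]
        push_cast
        module
      rw [e]
      have h1 := norm_apply_le_of_norm_le_one hT (U s - s)
      have h2 := norm_apply_le_of_norm_le_one hT (U z - x')
      have h3 := norm_add₄_le (a := T (U s - s)) (b := T s - (n : ℝ) • x') (c := T (U z - x'))
        (d := T x' - x')
      linarith [hTS x' hx']
    · have e : ∀ i, (f i (s + z) - ((n + 1 : ℕ) : ℝ) * f i y) ^ 2 = (f i s - n * f i y) ^ 2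
          + 2 * ((f i s - n * f i y) * f i z - (f i s - n * f i y) * f i y)
          + (f i (z - y)) ^ 2 := by
        intro i
        simp only [map_add, map_sub]
        push_cast
        ring
      have hb : ∀ i, (f i (z - y)) ^ 2 ≤ (2 * ‖f i‖) ^ 2 := by
        intro i
        apply sq_le_sq'
        all_goals
          have h1 := (f i).le_opNorm (z - y)
          have h2 : ‖z - y‖ ≤ 2 := by linarith [norm_sub_le z y]
          have h3 := abs_le.mp (h1.trans (mul_le_mul_of_nonneg_left h2 (norm_nonneg (f i))))
          linarith [h3.1, h3.2]
      have hb' := Finset.sum_le_sum fun i (_ : i ∈ Finset.univ) => hb i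
      simp only [sum_apply, smul_apply,
        smul_eq_mul] at hgz
      simp only [e, Finset.sum_add_distrib, ← Finset.mul_sum, Finset.sum_sub_distrib]
      push_cast
      linarith

/-- In the weak operator Daugavet property, slices may be replaced by basic weak neighbourhoods of an
arbitrary point `y` of the ball. -/
lemma WODP.exists_weakly_close (h : WODP X) {S : Set X} (hS : S.Finite)
    (hS1 : ∀ s ∈ S, ‖s‖ ≤ 1) {x' : X} (hx' : x' ∈ S) {ι : Type*} [Finite ι]
    (f : ι → X →L[ℝ] ℝ) {y : X} (hy : ‖y‖ ≤ 1) {ε : ℝ} (hε : 0 < ε) :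
    ∃ (z : X) (T : X →L[ℝ] X), ‖z‖ ≤ 1 ∧ ‖T‖ ≤ 1 ∧ (∀ p ∈ S, ‖T p - p‖ < ε) ∧
      ‖T z - x'‖ < ε ∧ ∀ i, |f i z - f i y| < ε := by
  have := Fintype.ofFinite ι
  set C : ℝ := ∑ i, (2 * ‖f i‖) ^ 2 + 1
  obtain ⟨n, hn⟩ := exists_nat_gt (C / ε ^ 2)
  have hC : 0 < C := by positivity
  have hn0 : (0 : ℝ) < n := lt_of_le_of_lt (by positivity) hn
  have hn1 : (1 : ℝ) ≤ n := by exact_mod_cast Nat.cast_pos.mp hn0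
  obtain ⟨s, T, hs, hT, hTS, hTs, hsum⟩ := h.exists_sum hS hS1 hx' f hy n hε
  refine ⟨(n : ℝ)⁻¹ • s, T, ?_, hT, hTS, ?_, fun i => ?_⟩
  · rwa [norm_smul, norm_inv, Real.norm_of_nonneg hn0.le, inv_mul_le_iff₀ hn0, mul_one]
  · have e : T ((n : ℝ)⁻¹ • s) - x' = (n : ℝ)⁻¹ • (T s - (n : ℝ) • x') := by
      rw [smul_sub, inv_smul_smul₀ hn0.ne', map_smul]
    rw [e, norm_smul, norm_inv, Real.norm_of_nonneg hn0.le, inv_mul_lt_iff₀ hn0]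
    exact hTs.trans_le (le_mul_of_one_le_left hε.le hn1)
  · have h1 : (f i s - n * f i y) ^ 2 ≤ C * n :=
      (Finset.single_le_sum (f := fun i => (f i s - n * f i y) ^ 2)
        (fun _ _ => sq_nonneg _) (Finset.mem_univ i)).trans hsum
    have h2 : C * n < (n * ε) ^ 2 := by
      rw [div_lt_iff₀ (by positivity)] at hn
      nlinarith
    have h3 : |f i s - n * f i y| < n * ε := abs_lt_of_sq_lt_sq (h1.trans_lt h2) (by positivity)
    have e : f i ((n : ℝ)⁻¹ • s) - f i y = (n : ℝ)⁻¹ * (f i s - n * f i y) := by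
      rw [map_smul, smul_eq_mul]
      field_simp
    rwa [e, abs_mul, abs_inv, abs_of_pos hn0, inv_mul_lt_iff₀ hn0]

/-- The first `n` entries of the constant family `y` have been replaced. Injectivity of the choice of
indices is what makes one replacement affect at most one argument of a form. -/
lemma WODP.exists_substitution (h : WODP X) {S : Set X} (hS : S.Finite)
    (hS1 : ∀ s ∈ S, ‖s‖ ≤ 1) {x' : X} (hx' : x' ∈ S) {y : X} (hy : ‖y‖ ≤ 1)
    {N k : ℕ} {m : Fin k → ℕ}
    (F : (j : Fin k) → ContinuousMultilinearMap ℝ (fun _ : Fin (m j) => X) ℝ)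
    (n : ℕ) (hn : n ≤ N) : ∀ {ε : ℝ}, 0 < ε →
    ∃ (ys : Fin N → X) (T : X →L[ℝ] X), (∀ i, ‖ys i‖ ≤ 1) ∧ ‖T‖ ≤ 1 ∧
      (∀ p ∈ S, ‖T p - p‖ < ε) ∧ (∀ i : Fin N, i.val < n → ‖T (ys i) - x'‖ < ε) ∧
      (∀ i : Fin N, n ≤ i.val → ys i = y) ∧
      ∀ (j : Fin k) (idx : Fin (m j) → Fin N), Function.Injective idx →
        |F j (fun t => ys (idx t)) - F j (fun _ => y)| < ε := by
  induction n with
  | zero =>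
    intro ε hε
    exact ⟨fun _ => y, ContinuousLinearMap.id ℝ X, fun _ => hy, ContinuousLinearMap.norm_id_le,
      by simpa using fun _ _ => hε, by simp, by simp, by simpa using fun _ _ _ => hε⟩
  | succ n ih =>
    intro ε hε
    obtain ⟨ys, T, hys, hT, hTS, hTys, hysy, hF⟩ := ih (by omega) (ε := ε / 2) (by positivity)
    -- Each functional freezes all arguments of `F j` except the one at `t₀`.
    obtain ⟨z, U, hz, hU, hUS, hUz, hfz⟩ := h.exists_weakly_close
      (S := S ∪ Set.range ys) (hS.union (Set.finite_range ys))
      (by rintro s (hs | ⟨i, rfl⟩); exacts [hS1 s hs, hys i])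
      (Set.mem_union_left _ hx')
      (ι := Σ j : Fin k, (Fin (m j) → Fin N) × Fin (m j))
      (fun a => (F a.1).toContinuousLinearMap (fun t => ys (a.2.1 t)) a.2.2)
      hy (ε := ε / 2) (by positivity)
    let i₀ : Fin N := ⟨n, by omega⟩
    have hcomp : ∀ v w, ‖U v - w‖ < ε / 2 → ‖T w - x'‖ < ε / 2 → ‖T.comp U v - x'‖ < ε := by
      intro v w h1 h2
      have e : T.comp U v - x' = T (U v - w) + (T w - x') := by simp
      rw [e]
      linarith [norm_add_le (T (U v - w)) (T w - x'), norm_apply_le_of_norm_le_one hT (U v - w)]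
    refine ⟨Function.update ys i₀ z, T.comp U, fun i => ?_, ?_, fun p hp => ?_, fun i hi => ?_,
      fun i hi => ?_, fun j idx hidx => ?_⟩
    · rcases eq_or_ne i i₀ with rfl | hi
      · simpa using hz
      · simpa [hi] using hys i
    · exact (ContinuousLinearMap.opNorm_comp_le _ _).trans (mul_le_one₀ hT (norm_nonneg _) hU)
    · have e : T.comp U p - p = T (U p - p) + (T p - p) := by simp
      rw [e]
      linarith [norm_add_le (T (U p - p)) (T p - p), norm_apply_le_of_norm_le_one hT (U p - p),
        hTS p hp, hUS p (Set.mem_union_left _ hp)]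
    · rcases eq_or_ne i i₀ with rfl | hne
      · rw [Function.update_self]
        exact hcomp z x' hUz (hTS x' hx')
      · rw [Function.update_of_ne hne]
        have : i.val ≠ n := fun hh => hne (Fin.ext hh)
        exact hcomp _ _ (hUS _ (Set.mem_union_right _ ⟨i, rfl⟩)) (hTys i (by omega))
    · have hne : i ≠ i₀ := fun hh => by
        have : i.val = n := congrArg Fin.val hh
        omega
      rw [Function.update_of_ne hne]
      exact hysy i (by omega)
    · by_cases hex : ∃ t₀, idx t₀ = i₀
      · obtain ⟨t₀, ht₀⟩ := hex
        have e1 : (fun t => Function.update ys i₀ z (idx t)) =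
            Function.update (fun t => ys (idx t)) t₀ z := by
          rw [← ht₀]
          exact Function.update_comp_eq_of_injective ys hidx t₀ z
        have e2 : Function.update (fun t => ys (idx t)) t₀ y = fun t => ys (idx t) := by
          rw [Function.update_eq_self_iff, ht₀]
          exact (hysy i₀ le_rfl).symm
        have h1 := hfz ⟨j, idx, t₀⟩
        simp only [ContinuousMultilinearMap.toContinuousLinearMap_apply, e2] at h1
        rw [e1]
        linarith [abs_sub_le (F j (Function.update (fun t => ys (idx t)) t₀ z))
          (F j fun t => ys (idx t)) (F j fun _ => y), hF j idx hidx]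
      · have e1 : (fun t => Function.update ys i₀ z (idx t)) = fun t => ys (idx t) := by
          funext t
          exact Function.update_of_ne (fun hh => hex ⟨t, hh⟩) _ _
        rw [e1]
        linarith [hF j idx hidx]

end


/-- inductive building block for the WODP. If `X` has the WODP, then given
`x₁,…,x_ℓ, x', y` in the closed unit ball, `ε > 0`, `N ≥ 1` and finitely many continuous
symmetric multilinear forms `F j` (each `m j`-linear with `1 ≤ m j ≤ N`), there exist
`y₁,…,y_N` in the closed unit ball and a norm-at-most-one operator `T` almost fixing each
`x_l`, sending each `y_i` close to `x'`, and moreover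
`|F j (y_{i₁},…,y_{i_{m j}}) - F j (y,…,y)| < ε` for all strictly increasing index
choices. -/
theorem wodp_multilinear_approximation
    {X : Type*} [NormedAddCommGroup X] [NormedSpace ℝ X] [CompleteSpace X]
    (hWODP : ∀ (n : ℕ) (xs : Fin n → X), (∀ i, ‖xs i‖ ≤ 1) →
      ∀ ε > (0 : ℝ), ∀ (x' : X), ‖x'‖ ≤ 1 →
        ∀ (f : X →L[ℝ] ℝ), ‖f‖ = 1 → ∀ α > (0 : ℝ),
          ∃ x : X, ‖x‖ ≤ 1 ∧ f x > 1 - α ∧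
            ∃ T : X →L[ℝ] X, ‖T‖ ≤ 1 ∧
              (∀ i, ‖T (xs i) - xs i‖ < ε) ∧ ‖T x - x'‖ < ε)
    (ℓ : ℕ) (xs : Fin ℓ → X) (hxs : ∀ l, ‖xs l‖ ≤ 1)
    (x' : X) (hx' : ‖x'‖ ≤ 1) (y : X) (hy : ‖y‖ ≤ 1)
    (ε : ℝ) (hε : 0 < ε)
    (N : ℕ) (hN : 1 ≤ N)
    (k : ℕ) (m : Fin k → ℕ)
    (F : (j : Fin k) → ContinuousMultilinearMap ℝ (fun _ : Fin (m j) => X) ℝ)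
    (hm : ∀ j, 1 ≤ m j ∧ m j ≤ N)
    (hsym : ∀ (j : Fin k) (σ : Equiv.Perm (Fin (m j))) (v : Fin (m j) → X),
      F j (v ∘ σ) = F j v) :
    ∃ (ys : Fin N → X) (T : X →L[ℝ] X),
      (∀ i, ‖ys i‖ ≤ 1) ∧ ‖T‖ ≤ 1 ∧
      (∀ l, ‖T (xs l) - xs l‖ < ε) ∧
      (∀ i, ‖T (ys i) - x'‖ < ε) ∧
      ∀ (j : Fin k) (idx : Fin (m j) → Fin N), StrictMono idx →
        |F j (fun t => ys (idx t)) - F j (fun _ => y)| < ε := by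
  have h : WODP X := hWODP
  obtain ⟨ys, T, h1, h2, h3, h4, -, h5⟩ := h.exists_substitution
    (S := insert x' (Set.range xs)) ((Set.finite_range xs).insert x')
    (by rintro s (rfl | ⟨i, rfl⟩); exacts [hx', hxs i]) (Set.mem_insert _ _) hy F N le_rfl hε
  exact ⟨ys, T, h1, h2, fun l => h3 _ (Set.mem_insert_of_mem _ ⟨l, rfl⟩),
    fun i => h4 i i.2, fun j idx hidx => h5 j idx hidx.injective⟩
end
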